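/- arXiv:1909.07295 — 8 statements merged into one kernel-verified Lean document; each statement's English description precedes it below -/
import Mathlib

section
/- Let 0<α<1, 0<λ<1, ε>0, C>0, and let p≥1 be an integer. Let f̂:ℝ→ℝ and ĝ:ℝ³→ℝ be measurable functions satisfying 0 ≤ f̂(ω) ≤ C·e^{−|ω|^α} for all ω∈ℝ and 0 ≤ ĝ(k) ≤ C·e^{−ε‖k‖^λ} for all k∈ℝ³. Define G₀(k,q) = f̂(‖q‖+‖k‖)·ĝ(q+k) and, recursively, G_{m+1}(k,q) = ∫_{ℝ³} ‖ℓ‖^p · f̂(‖q‖−‖ℓ‖) · ĝ(q−ℓ) · G_m(k,ℓ) dℓ. Then for every m≥0 there exists a polynomial Q_m of degree at most m·p with nonnegative coefficients, independent of k and q, such that |G_m(k,q)| ≤ Q_m(‖q‖) · e^{−(‖k‖+‖q‖)^α − ε‖k+q‖^λ} for all k,q ∈ ℝ³. -/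
open Real MeasureTheory

/-!
For `0 < s < 1` the power `t ↦ t ^ s` is subadditive with a quantitative gain,
`(2 - 2 ^ s) * (min x y) ^ s + (x + y) ^ s ≤ x ^ s + y ^ s`. Take `x = |‖q‖ - ‖ℓ‖|`,
`y = ‖k‖ + ‖ℓ‖` in the temporal factors and `x = ‖q - ℓ‖`, `y = ‖k + ℓ‖` in the spatial ones.
The triangle inequality bounds `x + y` below by `‖k‖ + ‖q‖`, respectively `‖k + q‖`, so each step
of the recursion reproduces the envelope `exp (-(‖k‖ + ‖q‖) ^ α - ε * ‖k + q‖ ^ lam)` and the gains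
are left over. The temporal gain absorbs powers of `ℓ` at the price of the same powers of
`1 + ‖q‖`, because `1 + ‖ℓ‖ ≤ (1 + ‖q‖) * (1 + min x y)`; the spatial gain makes the integral over
`ℓ` converge uniformly in `k` and `q`.
-/

lemma add_map_add_le_of_concaveOn {S : Set ℝ} {f : ℝ → ℝ} (hf : ConcaveOn ℝ S f) {x y d : ℝ}
    (hx : x ∈ S) (hyd : y + d ∈ S) (hxy : x ≤ y) (hd : 0 ≤ d) :
    f x + f (y + d) ≤ f (x + d) + f y := by
  rcases hxy.eq_or_lt with rfl | hlt
  · exact (add_comm _ _).le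
  have hw : 0 < y - x + d := by linarith
  have ht : 0 ≤ d / (y - x + d) := by positivity
  have ht' : 0 ≤ (y - x) / (y - x + d) := div_nonneg (by linarith) hw.le
  have hsum : d / (y - x + d) + (y - x) / (y - x + d) = 1 := by field_simp; ring
  have hxd : (y - x) / (y - x + d) * x + d / (y - x + d) * (y + d) = x + d := by field_simp; ring
  have hy : d / (y - x + d) * x + (y - x) / (y - x + d) * (y + d) = y := by field_simp; ring
  have h₁ := hf.2 hx hyd ht' ht (by rw [add_comm, hsum])
  have h₂ := hf.2 hx hyd ht ht' hsum
  simp only [smul_eq_mul, hxd, hy] at h₁ h₂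
  linear_combination h₁ + h₂ - (f x + f (y + d)) * hsum

lemma two_sub_two_rpow_pos {s : ℝ} (hs : s < 1) : 0 < 2 - (2 : ℝ) ^ s :=
  sub_pos.2 (Real.rpow_lt_self_of_one_lt one_lt_two hs)

lemma gain_mul_min_rpow_add_rpow_add_le {s x y : ℝ} (hs : 0 ≤ s) (hs1 : s ≤ 1)
    (hx : 0 ≤ x) (hy : 0 ≤ y) :
    (2 - 2 ^ s) * min x y ^ s + (x + y) ^ s ≤ x ^ s + y ^ s := by
  wlog hxy : x ≤ y generalizing x y
  · simpa only [min_comm, add_comm] using this hy hx (le_of_not_ge hxy)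
  have h : x ^ s + (y + x) ^ s ≤ (x + x) ^ s + y ^ s :=
    add_map_add_le_of_concaveOn (Real.concaveOn_rpow hs hs1) (Set.mem_Ici.2 hx)
      (Set.mem_Ici.2 (add_nonneg hy hx)) hxy hx
  rw [← two_mul, Real.mul_rpow zero_le_two hx] at h
  rw [min_eq_left hxy, add_comm x y]
  linarith

/-- The stretched exponential `t ↦ exp (-c t ^ s)`, the decay profile of both sampling functions.
It is only meant for `0 ≤ t`. -/
noncomputable def stretchedExp (c s t : ℝ) : ℝ := exp (-(c * t ^ s))

lemma stretchedExp_pos (c s t : ℝ) : 0 < stretchedExp c s t := exp_pos _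

lemma measurable_stretchedExp (c s : ℝ) : Measurable (stretchedExp c s) := by
  unfold stretchedExp
  fun_prop

lemma stretchedExp_le_stretchedExp {c s x y : ℝ} (hc : 0 ≤ c) (hs : 0 ≤ s) (hx : 0 ≤ x)
    (hxy : x ≤ y) : stretchedExp c s y ≤ stretchedExp c s x := by
  unfold stretchedExp
  gcongr

lemma stretchedExp_min_le_add (c s x y : ℝ) :
    stretchedExp c s (min x y) ≤ stretchedExp c s x + stretchedExp c s y := by
  have hx := (stretchedExp_pos c s x).le
  have hy := (stretchedExp_pos c s y).le
  rcases min_choice x y with h | h <;> rw [h] <;> linarith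

lemma stretchedExp_mul_stretchedExp_le {c s x y : ℝ} (hc : 0 ≤ c) (hs : 0 ≤ s) (hs1 : s ≤ 1)
    (hx : 0 ≤ x) (hy : 0 ≤ y) :
    stretchedExp c s x * stretchedExp c s y ≤
      stretchedExp c s (x + y) * stretchedExp (c * (2 - 2 ^ s)) s (min x y) := by
  simp only [stretchedExp, ← exp_add, exp_le_exp]
  linarith [mul_le_mul_of_nonneg_left (gain_mul_min_rpow_add_rpow_add_le hs hs1 hx hy) hc]

lemma exists_one_add_pow_mul_stretchedExp_le {c s : ℝ} (hc : 0 < c) (hs : 0 < s) (hs1 : s ≤ 1)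
    (n : ℕ) : ∃ K, 0 ≤ K ∧ ∀ t, 0 ≤ t → (1 + t) ^ n * stretchedExp c s t ≤ K := by
  obtain ⟨M, hM⟩ := exists_nat_ge (n / s)
  refine ⟨M.factorial / c ^ M * exp c, by positivity, fun t ht => ?_⟩
  have hpow : (1 + t) ^ n ≤ ((1 + t) ^ s) ^ M := by
    rw [← rpow_natCast, ← rpow_natCast ((1 + t) ^ s), ← rpow_mul (by positivity)]
    exact rpow_le_rpow_of_exponent_le (by linarith) ((div_le_iff₀' hs).1 hM)
  have hexp : ((1 + t) ^ s) ^ M ≤ M.factorial / c ^ M * exp (c * (1 + t) ^ s) := by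
    have h := pow_div_factorial_le_exp (c * (1 + t) ^ s) (by positivity) M
    rw [div_le_iff₀ (by positivity), mul_pow] at h
    rw [div_mul_eq_mul_div, le_div_iff₀ (by positivity)]
    linarith
  have hsub : (1 + t) ^ s ≤ 1 + t ^ s := by
    simpa using rpow_add_le_add_rpow zero_le_one ht hs.le hs1
  calc (1 + t) ^ n * stretchedExp c s t
      ≤ M.factorial / c ^ M * exp (c * (1 + t ^ s)) * exp (-(c * t ^ s)) := by
        unfold stretchedExp
        gcongr
        exact hpow.trans (hexp.trans (by gcongr))
    _ = M.factorial / c ^ M * exp c := by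
        rw [mul_assoc, ← exp_add]
        ring_nf

lemma one_add_le_mul_one_add_min {κ r t : ℝ} (hκ : 0 ≤ κ) (hr : 0 ≤ r) (ht : 0 ≤ t) :
    1 + t ≤ (1 + r) * (1 + min |r - t| (κ + t)) := by
  have hmin : 0 ≤ min |r - t| (κ + t) := by positivity
  have hle : t ≤ r + min |r - t| (κ + t) := by
    rw [← min_add_add_left, le_min_iff]
    constructor <;> linarith [neg_abs_le (r - t)]
  nlinarith [mul_nonneg hr hmin]

lemma exists_one_add_pow_mul_stretchedExp_abs_sub_le {c s : ℝ} (hc : 0 < c) (hs : 0 < s)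
    (hs1 : s < 1) (n : ℕ) :
    ∃ K, 0 ≤ K ∧ ∀ κ r t : ℝ, 0 ≤ κ → 0 ≤ r → 0 ≤ t →
      (1 + t) ^ n * (stretchedExp c s |r - t| * stretchedExp c s (κ + t)) ≤
        K * ((1 + r) ^ n * stretchedExp c s (κ + r)) := by
  obtain ⟨K, hK, hbound⟩ := exists_one_add_pow_mul_stretchedExp_le
    (mul_pos hc (two_sub_two_rpow_pos hs1)) hs hs1.le n
  refine ⟨K, hK, fun κ r t hκ hr ht => ?_⟩
  have hr_le : κ + r ≤ |r - t| + (κ + t) := by linarith [le_abs_self (r - t)]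
  have hprod : stretchedExp c s |r - t| * stretchedExp c s (κ + t) ≤
      stretchedExp c s (κ + r) * stretchedExp (c * (2 - 2 ^ s)) s (min |r - t| (κ + t)) :=
    (stretchedExp_mul_stretchedExp_le hc.le hs.le hs1.le (abs_nonneg _) (by positivity)).trans
      (mul_le_mul_of_nonneg_right
        (stretchedExp_le_stretchedExp hc.le hs.le (by positivity) hr_le) (stretchedExp_pos ..).le)
  have hpow : (1 + t) ^ n ≤ (1 + r) ^ n * (1 + min |r - t| (κ + t)) ^ n := by
    rw [← mul_pow]
    exact pow_le_pow_left₀ (by positivity) (one_add_le_mul_one_add_min hκ hr ht) n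
  have hpos := stretchedExp_pos c s
  calc (1 + t) ^ n * (stretchedExp c s |r - t| * stretchedExp c s (κ + t))
      ≤ (1 + r) ^ n * (1 + min |r - t| (κ + t)) ^ n * (stretchedExp c s (κ + r) *
          stretchedExp (c * (2 - 2 ^ s)) s (min |r - t| (κ + t))) :=
        mul_le_mul hpow hprod (mul_pos (hpos _) (hpos _)).le (by positivity)
    _ = (1 + min |r - t| (κ + t)) ^ n *
          stretchedExp (c * (2 - 2 ^ s)) s (min |r - t| (κ + t)) *
          ((1 + r) ^ n * stretchedExp c s (κ + r)) := by ring
    _ ≤ K * ((1 + r) ^ n * stretchedExp c s (κ + r)) :=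
        mul_le_mul_of_nonneg_right (hbound _ (by positivity))
          (mul_nonneg (by positivity) (hpos _).le)

lemma stretchedExp_norm_mul_stretchedExp_norm_le {F : Type*} [SeminormedAddCommGroup F]
    {c s : ℝ} (hc : 0 ≤ c) (hs : 0 ≤ s) (hs1 : s ≤ 1) (x y : F) :
    stretchedExp c s ‖x‖ * stretchedExp c s ‖y‖ ≤ stretchedExp c s ‖x + y‖ *
      (stretchedExp (c * (2 - 2 ^ s)) s ‖x‖ + stretchedExp (c * (2 - 2 ^ s)) s ‖y‖) :=
  (stretchedExp_mul_stretchedExp_le hc hs hs1 (norm_nonneg x) (norm_nonneg y)).trans <|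
    mul_le_mul (stretchedExp_le_stretchedExp hc hs (norm_nonneg _) (norm_add_le x y))
      (stretchedExp_min_le_add ..) (stretchedExp_pos ..).le (stretchedExp_pos ..).le

lemma exists_polynomial_eval_eq_mul_one_add_pow {A : ℝ} (hA : 0 ≤ A) (n : ℕ) :
    ∃ Q : Polynomial ℝ, Q.natDegree ≤ n ∧ (∀ i, 0 ≤ Q.coeff i) ∧
      ∀ x, Q.eval x = A * (1 + x) ^ n := by
  refine ⟨.C A * (1 + .X) ^ n, by compute_degree, fun i => ?_, fun x => by simp⟩
  rw [Polynomial.coeff_C_mul, Polynomial.coeff_one_add_X_pow]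
  positivity

section Envelope

variable {F : Type*} [SeminormedAddCommGroup F]

/-- The target decay `exp (-(‖k‖ + ‖q‖) ^ α - ε * ‖k + q‖ ^ lam)` of the iterates, as a product of
its temporal and spatial factors. -/
noncomputable def growthEnvelope (α lam ε : ℝ) (k q : F) : ℝ :=
  stretchedExp 1 α (‖k‖ + ‖q‖) * stretchedExp ε lam ‖k + q‖

lemma growthEnvelope_eq_exp (α lam ε : ℝ) (k q : F) :
    growthEnvelope α lam ε k q = exp (-((‖k‖ + ‖q‖) ^ α) - ε * ‖k + q‖ ^ lam) := by
  rw [growthEnvelope, stretchedExp, stretchedExp, ← exp_add, one_mul, ← sub_eq_add_neg]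

lemma growthEnvelope_pos (α lam ε : ℝ) (k q : F) : 0 < growthEnvelope α lam ε k q :=
  mul_pos (stretchedExp_pos ..) (stretchedExp_pos ..)

/-- The integrable majorant in `ℓ` left over from the spatial factors in one step of the
recursion. -/
noncomputable def spatialMajorant (lam ε : ℝ) (k q ℓ : F) : ℝ :=
  stretchedExp (ε * (2 - 2 ^ lam)) lam ‖q - ℓ‖ + stretchedExp (ε * (2 - 2 ^ lam)) lam ‖k + ℓ‖

lemma exists_one_add_norm_pow_mul_growthEnvelope_le {α lam ε : ℝ} (hα : 0 < α) (hα1 : α < 1)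
    (hlam : 0 ≤ lam) (hlam1 : lam ≤ 1) (hε : 0 ≤ ε) (n : ℕ) :
    ∃ K, 0 ≤ K ∧ ∀ k q ℓ : F,
      (1 + ‖ℓ‖) ^ n * (stretchedExp 1 α |‖q‖ - ‖ℓ‖| * stretchedExp ε lam ‖q - ℓ‖ *
          growthEnvelope α lam ε k ℓ) ≤
        K * ((1 + ‖q‖) ^ n * growthEnvelope α lam ε k q) * spatialMajorant lam ε k q ℓ := by
  obtain ⟨K, hK, htemporal⟩ :=
    exists_one_add_pow_mul_stretchedExp_abs_sub_le one_pos hα hα1 n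
  refine ⟨K, hK, fun k q ℓ => ?_⟩
  have hspatial := stretchedExp_norm_mul_stretchedExp_norm_le hε hlam hlam1 (q - ℓ) (k + ℓ)
  rw [show q - ℓ + (k + ℓ) = k + q by abel] at hspatial
  have hpos (c s t : ℝ) := (stretchedExp_pos c s t).le
  calc (1 + ‖ℓ‖) ^ n * (stretchedExp 1 α |‖q‖ - ‖ℓ‖| * stretchedExp ε lam ‖q - ℓ‖ *
        growthEnvelope α lam ε k ℓ)
      = (1 + ‖ℓ‖) ^ n * (stretchedExp 1 α |‖q‖ - ‖ℓ‖| * stretchedExp 1 α (‖k‖ + ‖ℓ‖)) *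
          (stretchedExp ε lam ‖q - ℓ‖ * stretchedExp ε lam ‖k + ℓ‖) := by
        rw [growthEnvelope]; ring
    _ ≤ K * ((1 + ‖q‖) ^ n * stretchedExp 1 α (‖k‖ + ‖q‖)) *
          (stretchedExp ε lam ‖k + q‖ * spatialMajorant lam ε k q ℓ) :=
        mul_le_mul (htemporal _ _ _ (norm_nonneg k) (norm_nonneg q) (norm_nonneg ℓ)) hspatial
          (mul_nonneg (hpos ..) (hpos ..))
          (mul_nonneg hK (mul_nonneg (by positivity) (hpos ..)))
    _ = K * ((1 + ‖q‖) ^ n * growthEnvelope α lam ε k q) * spatialMajorant lam ε k q ℓ := by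
        rw [growthEnvelope]; ring

/-- The integrand of the recursion `G_m ↦ G_{m+1}` at fixed `k`, with `h` standing for
`G_m(k, ·)`. -/
def recursionIntegrand (p : ℕ) (f : ℝ → ℝ) (g h : F → ℝ) (q ℓ : F) : ℝ :=
  ‖ℓ‖ ^ p * f (‖q‖ - ‖ℓ‖) * g (q - ℓ) * h ℓ

/-- `G k q` is bounded by the growth envelope, up to a polynomial factor of degree `n` in `‖q‖`
that does not depend on `k`. -/
def HasGrowthBound (α lam ε : ℝ) (n : ℕ) (G : F → F → ℝ) : Prop :=
  ∃ A, 0 ≤ A ∧ ∀ k q, |G k q| ≤ A * ((1 + ‖q‖) ^ n * growthEnvelope α lam ε k q)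

variable {α lam ε C : ℝ} {f : ℝ → ℝ} {g : F → ℝ} {G : F → F → ℝ} {n : ℕ}

lemma hasGrowthBound_initial (hf : ∀ ω, |f ω| ≤ C * stretchedExp 1 α |ω|)
    (hg : ∀ x, |g x| ≤ C * stretchedExp ε lam ‖x‖) :
    HasGrowthBound α lam ε 0 fun k q => f (‖q‖ + ‖k‖) * g (q + k) := by
  refine ⟨C * C, mul_self_nonneg C, fun k q => ?_⟩
  have hfq := hf (‖q‖ + ‖k‖)
  rw [abs_of_nonneg (a := ‖q‖ + ‖k‖) (by positivity)] at hfq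
  calc |f (‖q‖ + ‖k‖) * g (q + k)|
      ≤ C * stretchedExp 1 α (‖q‖ + ‖k‖) * (C * stretchedExp ε lam ‖q + k‖) := by
        rw [abs_mul]
        exact mul_le_mul hfq (hg _) (abs_nonneg _) ((abs_nonneg _).trans hfq)
    _ = C * C * ((1 + ‖q‖) ^ 0 * growthEnvelope α lam ε k q) := by
        rw [growthEnvelope, add_comm ‖q‖, add_comm q]; ring

lemma HasGrowthBound.exists_abs_recursionIntegrand_le (hα : 0 < α) (hα1 : α < 1) (hlam : 0 ≤ lam)
    (hlam1 : lam ≤ 1) (hε : 0 ≤ ε) (p : ℕ) (hf : ∀ ω, |f ω| ≤ C * stretchedExp 1 α |ω|)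
    (hg : ∀ x, |g x| ≤ C * stretchedExp ε lam ‖x‖) (hG : HasGrowthBound α lam ε n G) :
    ∃ A, 0 ≤ A ∧ ∀ k q ℓ, |recursionIntegrand p f g (G k) q ℓ| ≤
      A * ((1 + ‖q‖) ^ (n + p) * growthEnvelope α lam ε k q) * spatialMajorant lam ε k q ℓ := by
  obtain ⟨A, hA, hGA⟩ := hG
  obtain ⟨K, hK, hKenv⟩ :=
    exists_one_add_norm_pow_mul_growthEnvelope_le (F := F) hα hα1 hlam hlam1 hε (n + p)
  refine ⟨C * C * A * K, by have := mul_self_nonneg C; positivity, fun k q ℓ => ?_⟩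
  calc |recursionIntegrand p f g (G k) q ℓ|
      = ‖ℓ‖ ^ p * |f (‖q‖ - ‖ℓ‖)| * |g (q - ℓ)| * |G k ℓ| := by
        simp only [recursionIntegrand, abs_mul, abs_pow, abs_norm]
    _ ≤ (1 + ‖ℓ‖) ^ p * (C * stretchedExp 1 α |‖q‖ - ‖ℓ‖|) *
          (C * stretchedExp ε lam ‖q - ℓ‖) *
          (A * ((1 + ‖ℓ‖) ^ n * growthEnvelope α lam ε k ℓ)) := by
        have := (abs_nonneg _).trans (hf (‖q‖ - ‖ℓ‖))
        have := (abs_nonneg _).trans (hg (q - ℓ))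
        gcongr
        exacts [by linarith, hf _, hg _, hGA k ℓ]
    _ = C * C * A * ((1 + ‖ℓ‖) ^ (n + p) * (stretchedExp 1 α |‖q‖ - ‖ℓ‖| *
          stretchedExp ε lam ‖q - ℓ‖ * growthEnvelope α lam ε k ℓ)) := by ring
    _ ≤ C * C * A * (K * ((1 + ‖q‖) ^ (n + p) * growthEnvelope α lam ε k q) *
          spatialMajorant lam ε k q ℓ) :=
        mul_le_mul_of_nonneg_left (hKenv k q ℓ) (mul_nonneg (mul_self_nonneg C) hA)
    _ = C * C * A * K * ((1 + ‖q‖) ^ (n + p) * growthEnvelope α lam ε k q) *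
          spatialMajorant lam ε k q ℓ := by ring

lemma HasGrowthBound.exists_polynomial (hG : HasGrowthBound α lam ε n G) :
    ∃ Q : Polynomial ℝ, Q.natDegree ≤ n ∧ (∀ i, 0 ≤ Q.coeff i) ∧
      ∀ k q, |G k q| ≤ Q.eval ‖q‖ * exp (-((‖k‖ + ‖q‖) ^ α) - ε * ‖k + q‖ ^ lam) := by
  obtain ⟨A, hA, hGA⟩ := hG
  obtain ⟨Q, hdeg, hcoeff, heval⟩ := exists_polynomial_eval_eq_mul_one_add_pow hA n
  refine ⟨Q, hdeg, hcoeff, fun k q => (hGA k q).trans_eq ?_⟩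
  rw [heval, growthEnvelope_eq_exp, mul_assoc]

end Envelope

section Measurability

variable {F : Type*} [SeminormedAddCommGroup F] [SecondCountableTopology F] [MeasurableSpace F]
  [BorelSpace F] {f : ℝ → ℝ} {g h : F → ℝ}

lemma measurable_recursionIntegrand (p : ℕ) (hf : Measurable f) (hg : Measurable g)
    (hh : Measurable h) : Measurable (Function.uncurry (recursionIntegrand p f g h)) := by
  unfold recursionIntegrand Function.uncurry
  fun_prop

lemma measurable_integral_recursionIntegrand (p : ℕ) (hf : Measurable f)
    (hg : Measurable g) (hh : Measurable h) (μ : Measure F) [SFinite μ] :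
    Measurable fun q => ∫ ℓ, recursionIntegrand p f g h q ℓ ∂μ :=
  (measurable_recursionIntegrand p hf hg hh).stronglyMeasurable.integral_prod_right.measurable

end Measurability

section Integral

variable {E : Type*} [NormedAddCommGroup E] [NormedSpace ℝ E] [FiniteDimensional ℝ E]
  [MeasurableSpace E] [BorelSpace E] {μ : Measure E} [μ.IsAddHaarMeasure]
  {α lam ε C : ℝ} {p n : ℕ} {f : ℝ → ℝ} {g : E → ℝ}

lemma integrable_stretchedExp_norm {c s : ℝ} (hc : 0 < c) (hs : 0 < s) (hs1 : s ≤ 1) :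
    Integrable (fun x : E => stretchedExp c s ‖x‖) μ := by
  set d := Module.finrank ℝ E
  obtain ⟨K, -, hbound⟩ := exists_one_add_pow_mul_stretchedExp_le hc hs hs1 (d + 1)
  have hint : Integrable (fun x : E => (1 + ‖x‖) ^ (-((d + 1 : ℕ) : ℝ))) μ :=
    integrable_one_add_norm (by exact_mod_cast d.lt_succ_self)
  refine (hint.const_mul K).mono'
    ((measurable_stretchedExp c s).comp measurable_norm).aestronglyMeasurable
    (.of_forall fun x => ?_)
  rw [norm_of_nonneg (stretchedExp_pos ..).le, rpow_neg (by positivity), rpow_natCast,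
    ← div_eq_mul_inv, le_div_iff₀' (by positivity)]
  exact hbound _ (norm_nonneg x)

lemma integrable_spatialMajorant (hlam : 0 < lam) (hlam1 : lam < 1) (hε : 0 < ε) (k q : E) :
    Integrable (spatialMajorant lam ε k q) μ := by
  have h := integrable_stretchedExp_norm (μ := μ)
    (mul_pos hε (two_sub_two_rpow_pos hlam1)) hlam hlam1.le
  exact (h.comp_sub_left q).add (h.comp_add_left k)

lemma integral_spatialMajorant (hlam : 0 < lam) (hlam1 : lam < 1) (hε : 0 < ε) (k q : E) :
    ∫ ℓ, spatialMajorant lam ε k q ℓ ∂μ =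
      2 * ∫ x, stretchedExp (ε * (2 - 2 ^ lam)) lam ‖x‖ ∂μ := by
  have h := integrable_stretchedExp_norm (μ := μ)
    (mul_pos hε (two_sub_two_rpow_pos hlam1)) hlam hlam1.le
  unfold spatialMajorant
  rw [integral_add (h.comp_sub_left q) (h.comp_add_left k), two_mul,
    integral_sub_left_eq_self (fun x => stretchedExp _ lam ‖x‖),
    integral_add_left_eq_self (fun x => stretchedExp _ lam ‖x‖)]

lemma HasGrowthBound.integrable_recursionIntegrand {G : E → E → ℝ} (hα : 0 < α) (hα1 : α < 1)
    (hlam : 0 < lam) (hlam1 : lam < 1) (hε : 0 < ε) (hfm : Measurable f) (hgm : Measurable g)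
    (hf : ∀ ω, |f ω| ≤ C * stretchedExp 1 α |ω|) (hg : ∀ x, |g x| ≤ C * stretchedExp ε lam ‖x‖)
    (hGm : ∀ k, Measurable (G k)) (hG : HasGrowthBound α lam ε n G) (k q : E) :
    Integrable (recursionIntegrand p f g (G k) q) μ := by
  obtain ⟨A, -, hbound⟩ :=
    hG.exists_abs_recursionIntegrand_le hα hα1 hlam.le hlam1.le hε.le p hf hg
  exact ((integrable_spatialMajorant hlam hlam1 hε k q).const_mul _).mono'
    (measurable_recursionIntegrand p hfm hgm (hGm k)).of_uncurry_left.aestronglyMeasurable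
    (.of_forall (hbound k q))

lemma HasGrowthBound.integral_recursionIntegrand {G : E → E → ℝ} (hα : 0 < α) (hα1 : α < 1)
    (hlam : 0 < lam) (hlam1 : lam < 1) (hε : 0 < ε) (hf : ∀ ω, |f ω| ≤ C * stretchedExp 1 α |ω|)
    (hg : ∀ x, |g x| ≤ C * stretchedExp ε lam ‖x‖) (hG : HasGrowthBound α lam ε n G) :
    HasGrowthBound α lam ε (n + p) fun k q => ∫ ℓ, recursionIntegrand p f g (G k) q ℓ ∂μ := by
  obtain ⟨A, hA, hbound⟩ :=
    hG.exists_abs_recursionIntegrand_le hα hα1 hlam.le hlam1.le hε.le p hf hg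
  set I := ∫ x : E, stretchedExp (ε * (2 - 2 ^ lam)) lam ‖x‖ ∂μ
  have hI : 0 ≤ I := integral_nonneg fun x => (stretchedExp_pos ..).le
  refine ⟨A * (2 * I), by positivity, fun k q => ?_⟩
  calc |∫ ℓ, recursionIntegrand p f g (G k) q ℓ ∂μ|
      ≤ ∫ ℓ, A * ((1 + ‖q‖) ^ (n + p) * growthEnvelope α lam ε k q) *
          spatialMajorant lam ε k q ℓ ∂μ :=
        (Real.norm_eq_abs _).symm.trans_le <| norm_integral_le_of_norm_le
          ((integrable_spatialMajorant hlam hlam1 hε k q).const_mul _) (.of_forall (hbound k q))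
    _ = A * (2 * I) * ((1 + ‖q‖) ^ (n + p) * growthEnvelope α lam ε k q) := by
        rw [integral_const_mul, integral_spatialMajorant hlam hlam1 hε]; ring

end Integral

theorem iterate_growth_bound_general {E : Type*} [NormedAddCommGroup E] [NormedSpace ℝ E]
    [FiniteDimensional ℝ E] [MeasurableSpace E] [BorelSpace E] (μ : Measure E)
    [μ.IsAddHaarMeasure] {α lam ε C : ℝ} (hα : 0 < α) (hα1 : α < 1) (hlam : 0 < lam)
    (hlam1 : lam < 1) (hε : 0 < ε) (p : ℕ) {f : ℝ → ℝ} {g : E → ℝ} (hfm : Measurable f)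
    (hgm : Measurable g) (hf : ∀ ω, |f ω| ≤ C * exp (-(|ω| ^ α)))
    (hg : ∀ x, |g x| ≤ C * exp (-(ε * ‖x‖ ^ lam))) {G : ℕ → E → E → ℝ}
    (hG0 : ∀ k q, G 0 k q = f (‖q‖ + ‖k‖) * g (q + k))
    (hGrec : ∀ m k q, G (m + 1) k q =
      ∫ ℓ, ‖ℓ‖ ^ p * f (‖q‖ - ‖ℓ‖) * g (q - ℓ) * G m k ℓ ∂μ) (m : ℕ) :
    (∀ k q, Integrable (fun ℓ => ‖ℓ‖ ^ p * f (‖q‖ - ‖ℓ‖) * g (q - ℓ) * G m k ℓ) μ) ∧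
    ∃ Q : Polynomial ℝ, Q.natDegree ≤ m * p ∧ (∀ i, 0 ≤ Q.coeff i) ∧
      ∀ k q, |G m k q| ≤ Q.eval ‖q‖ * exp (-((‖k‖ + ‖q‖) ^ α) - ε * ‖k + q‖ ^ lam) := by
  have hf' (ω : ℝ) : |f ω| ≤ C * stretchedExp 1 α |ω| := by simpa [stretchedExp] using hf ω
  have hsucc (m : ℕ) : G (m + 1) = fun k q => ∫ ℓ, recursionIntegrand p f g (G m k) q ℓ ∂μ :=
    funext₂ (hGrec m)
  have hmeas (m : ℕ) (k : E) : Measurable (G m k) := by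
    induction m with
    | zero => rw [funext (hG0 k)]; fun_prop
    | succ m ih => rw [hsucc]; exact measurable_integral_recursionIntegrand p hfm hgm ih μ
  have hbound (m : ℕ) : HasGrowthBound α lam ε (m * p) (G m) := by
    induction m with
    | zero => rw [zero_mul, funext₂ hG0]; exact hasGrowthBound_initial hf' hg
    | succ m ih =>
      rw [hsucc, Nat.succ_mul]
      exact ih.integral_recursionIntegrand hα hα1 hlam hlam1 hε hf' hg
  exact ⟨(hbound m).integrable_recursionIntegrand hα hα1 hlam hlam1 hε hfm hgm hf' hg (hmeas m),
    (hbound m).exists_polynomial⟩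

/-- Growth bound for the iterated functions `G_m` arising in the moment recursion for
space- and time-averaged stress tensors: `|G_m(k,q)| ≤ Q_m(‖q‖) e^{−(‖k‖+‖q‖)^α − ε‖k+q‖^λ}`
with `Q_m` a polynomial of degree at most `m·p` with nonnegative coefficients. -/
theorem iterate_growth_bound
    (α lam ε C : ℝ) (hα : 0 < α) (hα1 : α < 1) (hlam : 0 < lam) (hlam1 : lam < 1)
    (hε : 0 < ε) (hC : 0 < C) (p : ℕ) (hp : 1 ≤ p)
    (fhat : ℝ → ℝ) (ghat : EuclideanSpace ℝ (Fin 3) → ℝ)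
    (hfmeas : Measurable fhat) (hgmeas : Measurable ghat)
    (hf : ∀ ω : ℝ, 0 ≤ fhat ω ∧ fhat ω ≤ C * Real.exp (-(|ω| ^ α)))
    (hg : ∀ k : EuclideanSpace ℝ (Fin 3), 0 ≤ ghat k ∧ ghat k ≤ C * Real.exp (-(ε * ‖k‖ ^ lam)))
    (G : ℕ → EuclideanSpace ℝ (Fin 3) → EuclideanSpace ℝ (Fin 3) → ℝ)
    (hG0 : ∀ k q, G 0 k q = fhat (‖q‖ + ‖k‖) * ghat (q + k))
    (hGrec : ∀ m k q, G (m + 1) k q =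
      ∫ ℓ : EuclideanSpace ℝ (Fin 3),
        ‖ℓ‖ ^ p * fhat (‖q‖ - ‖ℓ‖) * ghat (q - ℓ) * G m k ℓ) :
    ∀ m : ℕ, ∃ Q : Polynomial ℝ,
      Q.natDegree ≤ m * p ∧ (∀ i, 0 ≤ Q.coeff i) ∧
      ∀ k q : EuclideanSpace ℝ (Fin 3),
        |G m k q| ≤ Q.eval ‖q‖ * Real.exp (-((‖k‖ + ‖q‖) ^ α) - ε * ‖k + q‖ ^ lam) :=
  fun m => (iterate_growth_bound_general volume hα hα1 hlam hlam1 hε p hfmeas hgmeas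
    (fun ω => (abs_of_nonneg (hf ω).1).trans_le (hf ω).2)
    (fun k => (abs_of_nonneg (hg k).1).trans_le (hg k).2) hG0 hGrec m).2
end

section
/- Let 0<α<1, 0<λ<1, ε>0 and let r≥1 be a real number. For k,q ∈ ℝ³ define L^{(r)}(k,q) = ∫_{ℝ³} ‖ℓ‖^r · e^{−|‖q‖−‖ℓ‖|^α − ε‖q−ℓ‖^λ} · e^{−(‖k‖+‖ℓ‖)^α − ε‖k+ℓ‖^λ} dℓ, and let S_{r,α} = sup{ ℓ^r e^{−(ℓ−q)^α} : q>0, ℓ > 2^{1/r} q }. Then for all k,q ∈ ℝ³, L^{(r)}(k,q) ≤ (8π·Γ(3/λ) / (λ·(ε(1−λ))^{3/λ})) · (2‖q‖^r + S_{r,α}) · e^{−(‖k‖+‖q‖)^α − ε‖k+q‖^λ}. -/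
open Real MeasureTheory

/-!
The two kinds of weight are treated separately. For the weights with exponent `α`, subadditivity
of `t ↦ t ^ α` yields the factor `e ^ (-(‖k‖ + ‖q‖) ^ α)` when `‖ℓ‖ ≤ c * ‖q‖`; beyond that
threshold `‖k‖ + ‖ℓ‖` already exceeds `‖k‖ + ‖q‖`, and the remaining
`‖ℓ‖ ^ r * e ^ (-(‖ℓ‖ - ‖q‖) ^ α)` is bounded by its supremum. For the weights with exponent `λ`,
Bernoulli's inequality sharpens subadditivity to
`(a + b) ^ λ + (1 - λ) * (min a b) ^ λ ≤ a ^ λ + b ^ λ`, and the surplus term is what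
makes the remaining integral over `ℓ` converge.
-/

section StretchedExponential

variable {p a b : ℝ}

lemma add_rpow_add_mul_min_rpow_le (hp : 0 ≤ p) (hp1 : p ≤ 1) (ha : 0 ≤ a) (hb : 0 ≤ b) :
    (a + b) ^ p + (1 - p) * min a b ^ p ≤ a ^ p + b ^ p := by
  wlog hab : a ≤ b generalizing a b
  · simpa only [add_comm, min_comm] using this hb ha (le_of_not_ge hab)
  rw [min_eq_left hab]
  suffices (a + b) ^ p ≤ b ^ p + p * a ^ p by linarith
  rcases hb.eq_or_lt with rfl | hb
  · obtain rfl : a = 0 := le_antisymm hab ha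
    simpa only [add_zero] using le_add_of_nonneg_right (by positivity)
  have hratio : a / b ≤ (a / b) ^ p :=
    self_le_rpow_of_le_one (by positivity) ((div_le_one hb).2 hab) hp1
  calc (a + b) ^ p = b ^ p * (1 + a / b) ^ p := by
        rw [← mul_rpow hb.le (by positivity)]; congr 1; field_simp; ring
    _ ≤ b ^ p * (1 + p * (a / b)) := by
        gcongr
        exact rpow_one_add_le_one_add_mul_self (by linarith [div_nonneg ha hb.le]) hp hp1
    _ ≤ b ^ p * (1 + p * (a / b) ^ p) := by gcongr
    _ = b ^ p + p * a ^ p := by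
        rw [div_rpow ha hb.le]; field_simp

lemma exp_neg_mul_rpow_mul_exp_neg_mul_rpow_le {ε c : ℝ} (hp : 0 ≤ p) (hp1 : p ≤ 1)
    (hε : 0 ≤ ε) (ha : 0 ≤ a) (hb : 0 ≤ b) (hc : 0 ≤ c) (hcab : c ≤ a + b) :
    exp (-ε * a ^ p) * exp (-ε * b ^ p) ≤
      (exp (-(ε * (1 - p)) * a ^ p) + exp (-(ε * (1 - p)) * b ^ p)) * exp (-ε * c ^ p) := by
  have hsurplus : c ^ p + (1 - p) * min a b ^ p ≤ a ^ p + b ^ p :=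
    (add_le_add_left (rpow_le_rpow hc hcab hp) _).trans (add_rpow_add_mul_min_rpow_le hp hp1 ha hb)
  calc exp (-ε * a ^ p) * exp (-ε * b ^ p)
      ≤ exp (-(ε * (1 - p)) * min a b ^ p) * exp (-ε * c ^ p) := by
        rw [← exp_add, ← exp_add, exp_le_exp]
        linarith [mul_le_mul_of_nonneg_left hsurplus hε]
    _ ≤ _ := by
        gcongr
        rcases min_choice a b with h | h <;> rw [h]
        · exact le_add_of_nonneg_right (exp_nonneg _)
        · exact le_add_of_nonneg_left (exp_nonneg _)

lemma rpow_le_mul_exp {s x : ℝ} (hs : 0 ≤ s) (hx : 0 ≤ x) : x ^ s ≤ (s + 1) ^ s * exp x := by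
  have hs1 : 0 < s + 1 := by positivity
  have hbase : x / (s + 1) ≤ exp (x / (s + 1)) := by linarith [add_one_le_exp (x / (s + 1))]
  calc x ^ s = (s + 1) ^ s * (x / (s + 1)) ^ s := by
        rw [← mul_rpow hs1.le (by positivity), mul_div_cancel₀ x hs1.ne']
    _ ≤ (s + 1) ^ s * exp (x / (s + 1)) ^ s := by gcongr
    _ = (s + 1) ^ s * exp (x * (s / (s + 1))) := by rw [← exp_mul]; ring_nf
    _ ≤ (s + 1) ^ s * exp x := by
        gcongr
        exact mul_le_of_le_one_right hx ((div_le_one hs1).2 (by linarith))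

end StretchedExponential

section FarValues

variable {c r α q l : ℝ}

/-- The values of `ℓ ^ r * e ^ (-(ℓ - q) ^ α)` over `0 < q` and `c * q < ℓ`. The paper's `S_{r,α}`
is the supremum of this set for `c = 2 ^ (1 / r)`. -/
def farValues (c r α : ℝ) : Set ℝ :=
  {x | ∃ q l : ℝ, 0 < q ∧ c * q < l ∧ x = l ^ r * exp (-((l - q) ^ α))}

lemma bddAbove_farValues (hc : 1 < c) (hr : 0 ≤ r) (hα : 0 < α) :
    BddAbove (farValues c r α) := by
  have hδ : 0 < 1 - c⁻¹ := sub_pos.2 (inv_lt_one_of_one_lt₀ hc)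
  set δ := 1 - c⁻¹ with hδ_def
  refine ⟨(r / α + 1) ^ (r / α) / δ ^ r, ?_⟩
  rintro _ ⟨q, l, hq, hl, rfl⟩
  have hl0 : 0 < l := lt_trans (by positivity) hl
  have hgap : δ * l ≤ l - q := by
    have : q ≤ c⁻¹ * l := (le_inv_mul_iff₀ (by positivity)).2 hl.le
    linarith [show δ * l = l - c⁻¹ * l by rw [hδ_def]; ring]
  have hpow : (δ * l) ^ r ≤ (r / α + 1) ^ (r / α) * exp ((δ * l) ^ α) :=
    calc (δ * l) ^ r = ((δ * l) ^ α) ^ (r / α) := by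
          rw [← rpow_mul (by positivity), mul_div_cancel₀ r hα.ne']
      _ ≤ _ := rpow_le_mul_exp (by positivity) (by positivity)
  rw [le_div_iff₀ (by positivity)]
  calc l ^ r * exp (-((l - q) ^ α)) * δ ^ r
      ≤ l ^ r * exp (-((δ * l) ^ α)) * δ ^ r := by gcongr
    _ = (δ * l) ^ r * exp (-((δ * l) ^ α)) := by
        rw [mul_rpow hδ.le hl0.le (z := r)]; ring
    _ ≤ (r / α + 1) ^ (r / α) * exp ((δ * l) ^ α) * exp (-((δ * l) ^ α)) := by gcongr
    _ = (r / α + 1) ^ (r / α) := by rw [mul_assoc, ← exp_add, add_neg_cancel, exp_zero, mul_one]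

lemma le_sSup_farValues (hc : 1 < c) (hr : 0 ≤ r) (hα : 0 < α) (hq : 0 ≤ q) (hl : c * q < l) :
    l ^ r * exp (-((l - q) ^ α)) ≤ sSup (farValues c r α) := by
  have hc0 : 0 < c := by linarith
  have hl0 : 0 < l := lt_of_le_of_lt (by positivity) hl
  -- `farValues` excludes `q = 0`, but the expression increases with `q`, so `q` may be enlarged.
  obtain ⟨q', hqq', hq'l⟩ := exists_between ((lt_div_iff₀' hc0).2 hl)
  have hq'l' : q' ≤ l := hq'l.le.trans (div_le_self hl0.le hc.le)
  calc l ^ r * exp (-((l - q) ^ α)) ≤ l ^ r * exp (-((l - q') ^ α)) := by gcongr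
    _ ≤ sSup (farValues c r α) :=
        le_csSup (bddAbove_farValues hc hr hα)
          ⟨q', l, hq.trans_lt hqq', (lt_div_iff₀' hc0).1 hq'l, rfl⟩

lemma sSup_farValues_nonneg (hc : 1 < c) (hr : 0 ≤ r) (hα : 0 < α) :
    0 ≤ sSup (farValues c r α) :=
  le_trans (by positivity) (le_sSup_farValues (q := 0) (l := 1) hc hr hα le_rfl (by simp))

lemma rpow_mul_exp_neg_mul_exp_neg_le {k : ℝ} (hc : 1 < c) (hr : 0 ≤ r) (hα : 0 < α) (hα1 : α ≤ 1)
    (hk : 0 ≤ k) (hq : 0 ≤ q) (hl : 0 ≤ l) :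
    l ^ r * exp (-(|q - l| ^ α)) * exp (-((k + l) ^ α)) ≤
      (c ^ r * q ^ r + sSup (farValues c r α)) * exp (-((k + q) ^ α)) := by
  have hc0 : 0 < c := by linarith
  have hS := sSup_farValues_nonneg hc hr hα
  rcases le_or_gt l (c * q) with hnear | hfar
  · have htriangle : (k + q) ^ α ≤ |q - l| ^ α + (k + l) ^ α :=
      calc (k + q) ^ α ≤ (|q - l| + (k + l)) ^ α :=
            rpow_le_rpow (by positivity) (by linarith [le_abs_self (q - l)]) hα.le
        _ ≤ |q - l| ^ α + (k + l) ^ α :=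
            rpow_add_le_add_rpow (abs_nonneg _) (by positivity) hα.le hα1
    calc l ^ r * exp (-(|q - l| ^ α)) * exp (-((k + l) ^ α))
        = l ^ r * exp (-(|q - l| ^ α + (k + l) ^ α)) := by rw [mul_assoc, ← exp_add, neg_add]
      _ ≤ (c * q) ^ r * exp (-((k + q) ^ α)) := by gcongr
      _ ≤ _ := by
          rw [mul_rpow hc0.le hq]
          gcongr
          exact le_add_of_nonneg_right hS
  · have hql : q ≤ l := (le_mul_of_one_le_left hq hc.le).trans hfar.le
    have hfar_le : l ^ r * exp (-(|q - l| ^ α)) ≤ sSup (farValues c r α) := by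
      rw [abs_sub_comm, abs_of_nonneg (sub_nonneg.2 hql)]
      exact le_sSup_farValues hc hr hα hq hfar
    calc l ^ r * exp (-(|q - l| ^ α)) * exp (-((k + l) ^ α))
        ≤ sSup (farValues c r α) * exp (-((k + q) ^ α)) := by gcongr
      _ ≤ _ := by
          gcongr
          exact le_add_of_nonneg_left (by positivity)

end FarValues

section Integration

open Metric Module

variable {E : Type*} [NormedAddCommGroup E] [NormedSpace ℝ E] [FiniteDimensional ℝ E]
  [MeasurableSpace E] [BorelSpace E] (μ : Measure E) [μ.IsAddHaarMeasure] {p b : ℝ}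

lemma integral_exp_neg_norm_rpow (hp : 0 < p) :
    ∫ x : E, exp (-‖x‖ ^ p) ∂μ = μ.real (ball 0 1) * Gamma (finrank ℝ E / p + 1) := by
  have hΓ : 0 < Gamma (finrank ℝ E / p + 1) := Gamma_pos_of_pos (by positivity)
  rw [measureReal_def, measure_unitBall_eq_integral_div_gamma μ hp, ENNReal.toReal_ofReal
    (div_nonneg (integral_nonneg fun _ => exp_nonneg _) hΓ.le), div_mul_cancel₀ _ hΓ.ne']

lemma integral_exp_neg_mul_norm_rpow (hp : 0 < p) (hb : 0 < b) :
    ∫ x : E, exp (-b * ‖x‖ ^ p) ∂μ =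
      μ.real (ball 0 1) * Gamma (finrank ℝ E / p + 1) / b ^ (finrank ℝ E / p) := by
  have hscale (x : E) : exp (-b * ‖x‖ ^ p) = exp (-‖b ^ p⁻¹ • x‖ ^ p) := by
    rw [norm_smul, norm_of_nonneg (by positivity), mul_rpow (by positivity) (norm_nonneg x),
      rpow_inv_rpow hb.le hp.ne', neg_mul]
  simp only [hscale]
  rw [Measure.integral_comp_smul_of_nonneg μ (fun x => exp (-‖x‖ ^ p)) _
    (hR := by positivity), integral_exp_neg_norm_rpow μ hp, ← rpow_mul_natCast hb.le,
    smul_eq_mul, inv_mul_eq_div, inv_mul_eq_div]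

lemma integrable_exp_neg_mul_norm_rpow (hp : 0 < p) (hb : 0 < b) :
    Integrable (fun x : E => exp (-b * ‖x‖ ^ p)) μ := by
  refine .of_integral_ne_zero ?_
  rw [integral_exp_neg_mul_norm_rpow μ hp hb]
  have hball : 0 < μ.real (ball (0 : E) 1) :=
    ENNReal.toReal_pos (measure_ball_pos μ 0 one_pos).ne' measure_ball_lt_top.ne
  positivity

lemma integrable_exp_neg_norm_sub_mul_exp_neg_norm_add (hp : 0 < p) (hb : 0 < b) (k q : E) :
    Integrable (fun x : E => exp (-b * ‖q - x‖ ^ p) * exp (-b * ‖k + x‖ ^ p)) μ := by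
  have hint := integrable_exp_neg_mul_norm_rpow μ hp hb
  refine (hint.comp_sub_left q).mul_bdd (c := 1)
    (hint.comp_add_left k).aestronglyMeasurable (.of_forall fun x => ?_)
  rw [norm_of_nonneg (exp_nonneg _), exp_le_one_iff, neg_mul, neg_nonpos]
  positivity

lemma integral_exp_neg_norm_sub_mul_exp_neg_norm_add_le {ε : ℝ} (hp : 0 < p) (hp1 : p < 1)
    (hε : 0 < ε) (k q : E) :
    ∫ x : E, exp (-ε * ‖q - x‖ ^ p) * exp (-ε * ‖k + x‖ ^ p) ∂μ ≤
      2 * μ.real (ball (0 : E) 1) * Gamma (finrank ℝ E / p + 1) /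
        (ε * (1 - p)) ^ (finrank ℝ E / p) * exp (-ε * ‖k + q‖ ^ p) := by
  have hb : 0 < ε * (1 - p) := mul_pos hε (sub_pos.2 hp1)
  have hint := integrable_exp_neg_mul_norm_rpow μ hp hb
  have hval := integral_exp_neg_mul_norm_rpow μ hp hb
  set g : E → ℝ := fun x => exp (-(ε * (1 - p)) * ‖x‖ ^ p)
  have hsplit (x : E) : exp (-ε * ‖q - x‖ ^ p) * exp (-ε * ‖k + x‖ ^ p) ≤
      (g (q - x) + g (k + x)) * exp (-ε * ‖k + q‖ ^ p) := by
    refine exp_neg_mul_rpow_mul_exp_neg_mul_rpow_le hp.le hp1.le hε.le (norm_nonneg _)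
      (norm_nonneg _) (norm_nonneg _) ?_
    simpa only [show (q - x) + (k + x) = k + q by abel] using norm_add_le (q - x) (k + x)
  calc ∫ x : E, exp (-ε * ‖q - x‖ ^ p) * exp (-ε * ‖k + x‖ ^ p) ∂μ
      ≤ ∫ x, (g (q - x) + g (k + x)) * exp (-ε * ‖k + q‖ ^ p) ∂μ :=
        integral_mono (integrable_exp_neg_norm_sub_mul_exp_neg_norm_add μ hp hε k q)
          (((hint.comp_sub_left q).add (hint.comp_add_left k)).mul_const _) hsplit
    _ = (∫ x, g x ∂μ + ∫ x, g x ∂μ) * exp (-ε * ‖k + q‖ ^ p) := by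
        rw [integral_mul_const, integral_add (hint.comp_sub_left q) (hint.comp_add_left k),
          integral_sub_left_eq_self g μ q, integral_add_left_eq_self g k]
    _ = _ := by rw [hval]; ring

theorem L_integral_bound_general {α lam ε r c : ℝ} (hα : 0 < α) (hα1 : α ≤ 1) (hlam : 0 < lam)
    (hlam1 : lam < 1) (hε : 0 < ε) (hr : 0 ≤ r) (hc : 1 < c) (k q : E) :
    ∫ ℓ : E, ‖ℓ‖ ^ r * exp (-(|‖q‖ - ‖ℓ‖| ^ α) - ε * ‖q - ℓ‖ ^ lam)
        * exp (-((‖k‖ + ‖ℓ‖) ^ α) - ε * ‖k + ℓ‖ ^ lam) ∂μ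
      ≤ 2 * μ.real (ball (0 : E) 1) * Gamma (finrank ℝ E / lam + 1)
          / (ε * (1 - lam)) ^ (finrank ℝ E / lam)
        * (c ^ r * ‖q‖ ^ r + sSup (farValues c r α))
        * exp (-((‖k‖ + ‖q‖) ^ α) - ε * ‖k + q‖ ^ lam) := by
  set M := (c ^ r * ‖q‖ ^ r + sSup (farValues c r α)) * exp (-((‖k‖ + ‖q‖) ^ α)) with hM
  have hM0 : 0 ≤ M := mul_nonneg
    (add_nonneg (by positivity) (sSup_farValues_nonneg hc hr hα)) (exp_nonneg _)
  have hexp (s t : ℝ) : exp (-s - ε * t) = exp (-s) * exp (-ε * t) := by rw [← exp_add]; ring_nf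
  have hint := integrable_exp_neg_norm_sub_mul_exp_neg_norm_add μ hlam hε k q
  simp only [hexp]
  calc _ ≤ ∫ ℓ : E, M * (exp (-ε * ‖q - ℓ‖ ^ lam) * exp (-ε * ‖k + ℓ‖ ^ lam)) ∂μ := by
        refine integral_mono_of_nonneg (.of_forall fun ℓ => by positivity) (hint.const_mul M)
          (.of_forall fun ℓ => ?_)
        have hweight := rpow_mul_exp_neg_mul_exp_neg_le hc hr hα hα1 (norm_nonneg k)
          (norm_nonneg q) (norm_nonneg ℓ)
        refine le_of_eq_of_le ?_ (mul_le_mul_of_nonneg_right hweight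
          (mul_nonneg (exp_nonneg (-ε * ‖q - ℓ‖ ^ lam)) (exp_nonneg (-ε * ‖k + ℓ‖ ^ lam))))
        ring
    _ = M * ∫ ℓ : E, exp (-ε * ‖q - ℓ‖ ^ lam) * exp (-ε * ‖k + ℓ‖ ^ lam) ∂μ :=
        integral_const_mul _ _
    _ ≤ _ := (mul_le_mul_of_nonneg_left
        (integral_exp_neg_norm_sub_mul_exp_neg_norm_add_le μ hlam hlam1 hε k q) hM0).trans_eq
        (by rw [hM]; ring)

end Integration

lemma two_mul_volume_real_unitBall_fin_three_mul_Gamma_div {p : ℝ} (hp : 0 < p) (x : ℝ) :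
    2 * volume.real (Metric.ball (0 : EuclideanSpace ℝ (Fin 3)) 1) * Gamma (3 / p + 1) / x =
      8 * π * Gamma (3 / p) / (p * x) := by
  rw [measureReal_def, EuclideanSpace.volume_ball_fin_three, Gamma_add_one (by positivity)]
  simp only [ENNReal.ofReal_one, one_pow, one_mul,
    ENNReal.toReal_ofReal (show 0 ≤ π * 4 / 3 by positivity)]
  field_simp
  norm_num

/-- Bound on the integral `L^{(r)}(k,q)` in terms of `S_{r,α}` and the Gamma function. -/
theorem L_integral_bound
    (α lam ε r : ℝ) (hα : 0 < α) (hα1 : α < 1) (hlam : 0 < lam) (hlam1 : lam < 1)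
    (hε : 0 < ε) (hr : 1 ≤ r)
    (k q : EuclideanSpace ℝ (Fin 3)) :
    (∫ ℓ : EuclideanSpace ℝ (Fin 3),
        ‖ℓ‖ ^ r * Real.exp (-(|‖q‖ - ‖ℓ‖| ^ α) - ε * ‖q - ℓ‖ ^ lam)
          * Real.exp (-((‖k‖ + ‖ℓ‖) ^ α) - ε * ‖k + ℓ‖ ^ lam))
      ≤ (8 * π * Real.Gamma (3 / lam) / (lam * (ε * (1 - lam)) ^ (3 / lam)))
        * (2 * ‖q‖ ^ r +
            sSup {x : ℝ | ∃ q' ℓ' : ℝ, 0 < q' ∧ (2:ℝ) ^ (1 / r) * q' < ℓ' ∧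
              x = ℓ' ^ r * Real.exp (-((ℓ' - q') ^ α))})
        * Real.exp (-((‖k‖ + ‖q‖) ^ α) - ε * ‖k + q‖ ^ lam) := by
  have hr0 : 0 < r := by linarith
  have hthreshold : ((2 : ℝ) ^ (1 / r)) ^ r = 2 := by
    rw [one_div, rpow_inv_rpow zero_le_two hr0.ne']
  simpa only [finrank_euclideanSpace_fin, Nat.cast_ofNat, farValues, hthreshold,
    two_mul_volume_real_unitBall_fin_three_mul_Gamma_div hlam]
    using L_integral_bound_general volume hα hα1.le hlam hlam1 hε hr0.le
      (one_lt_rpow one_lt_two (one_div_pos.2 hr0)) k q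
end

section
/- Let 0<α<1 and let x, y ∈ ℝ³. Then ‖x‖^α + ‖y‖^α ≥ ‖x+y‖^α + (1−α)·min{‖x‖, ‖y‖}^α, where ‖·‖ is the Euclidean norm on ℝ³. -/
open Real

/-!
Concavity bounds `(a + b) ^ α` by the tangent line at `a`, namely `a ^ α + α * a ^ (α - 1) * b`.
If `b ≤ a`, then `a ^ (α - 1) ≤ b ^ (α - 1)` because `α - 1 ≤ 0`, so the increment is at most
`α * b ^ α`, which is `(1 - α) * b ^ α` less than the increment `b ^ α` given by subadditivity.
-/

section

variable {α a b : ℝ}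

lemma rpow_add_le_rpow_add_mul_rpow_sub_one_mul (hα : 0 ≤ α) (hα1 : α ≤ 1) (ha : 0 < a)
    (hab : -a ≤ b) : (a + b) ^ α ≤ a ^ α + α * a ^ (α - 1) * b := by
  have hba : -1 ≤ b / a := by rwa [le_div_iff₀ ha, neg_one_mul]
  calc (a + b) ^ α = (a * (1 + b / a)) ^ α := by rw [mul_one_add, mul_div_cancel₀ b ha.ne']
    _ = a ^ α * (1 + b / a) ^ α := mul_rpow ha.le (by linarith)
    _ ≤ a ^ α * (1 + α * (b / a)) := by
      gcongr
      exact rpow_one_add_le_one_add_mul_self hba hα hα1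
    _ = a ^ α + α * a ^ (α - 1) * b := by
      rw [rpow_sub_one ha.ne']
      ring

lemma rpow_add_le_rpow_add_mul_rpow (hα : 0 ≤ α) (hα1 : α ≤ 1) (hb : 0 ≤ b) (hba : b ≤ a) :
    (a + b) ^ α ≤ a ^ α + α * b ^ α := by
  rcases hb.eq_or_lt with rfl | hb_pos
  · rw [add_zero]
    exact le_add_of_nonneg_right (mul_nonneg hα (rpow_nonneg le_rfl α))
  · calc (a + b) ^ α ≤ a ^ α + α * a ^ (α - 1) * b :=
          rpow_add_le_rpow_add_mul_rpow_sub_one_mul hα hα1 (hb_pos.trans_le hba) (by linarith)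
      _ ≤ a ^ α + α * b ^ (α - 1) * b := by
        have hpow : a ^ (α - 1) ≤ b ^ (α - 1) :=
          rpow_le_rpow_of_nonpos hb_pos hba (sub_nonpos.2 hα1)
        gcongr
      _ = a ^ α + α * b ^ α := by rw [mul_assoc, ← rpow_add_one hb_pos.ne', sub_add_cancel]

lemma rpow_add_add_mul_min_rpow_le (hα : 0 ≤ α) (hα1 : α ≤ 1) (ha : 0 ≤ a) (hb : 0 ≤ b) :
    (a + b) ^ α + (1 - α) * min a b ^ α ≤ a ^ α + b ^ α := by
  wlog hba : b ≤ a generalizing a b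
  · simpa only [add_comm, min_comm] using this hb ha (le_of_not_ge hba)
  rw [min_eq_right hba]
  linarith [rpow_add_le_rpow_add_mul_rpow hα hα1 hb hba]

end

theorem norm_rpow_add_min_le_general {E : Type*} [SeminormedAddGroup E] {α : ℝ} (hα : 0 ≤ α)
    (hα1 : α ≤ 1) (x y : E) :
    ‖x + y‖ ^ α + (1 - α) * (min ‖x‖ ‖y‖) ^ α ≤ ‖x‖ ^ α + ‖y‖ ^ α :=
  calc ‖x + y‖ ^ α + (1 - α) * (min ‖x‖ ‖y‖) ^ α
      ≤ (‖x‖ + ‖y‖) ^ α + (1 - α) * (min ‖x‖ ‖y‖) ^ α := by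
        gcongr
        exact norm_add_le x y
    _ ≤ ‖x‖ ^ α + ‖y‖ ^ α := rpow_add_add_mul_min_rpow_le hα hα1 (norm_nonneg x) (norm_nonneg y)

/-- Vector-norm strengthening of subadditivity of `t ↦ t^α` for `0 < α < 1` on `ℝ³`. -/
theorem norm_rpow_add_min_le (α : ℝ) (hα : 0 < α) (hα1 : α < 1)
    (x y : EuclideanSpace ℝ (Fin 3)) :
    ‖x + y‖ ^ α + (1 - α) * (min ‖x‖ ‖y‖) ^ α ≤ ‖x‖ ^ α + ‖y‖ ^ α :=
  norm_rpow_add_min_le_general hα.le hα1.le x y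
end

section
/- Let 0<α<1 and let k, q, ℓ be nonnegative real numbers. Then |q−ℓ|^α + (k+ℓ)^α ≥ (k+q)^α + (1−α)·min{|q−ℓ|, k+ℓ}^α. In particular, e^{−|q−ℓ|^α − (k+ℓ)^α} ≤ e^{−(k+q)^α}. -/
open Real

section

variable {α x y z : ℝ}

theorem add_rpow_le_rpow_add_mul_mul_rpow_sub_one (hα : 0 ≤ α) (hα1 : α ≤ 1) (hx : 0 < x)
    (hxy : 0 ≤ x + y) : (x + y) ^ α ≤ x ^ α + α * (y * x ^ (α - 1)) := by
  have bernoulli : (1 + y / x) ^ α ≤ 1 + α * (y / x) :=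
    rpow_one_add_le_one_add_mul_self (by rw [le_div_iff₀ hx]; linarith) hα hα1
  have factor : x + y = x * (1 + y / x) := by field_simp
  calc (x + y) ^ α = x ^ α * (1 + y / x) ^ α := by
        rw [factor, mul_rpow hx.le (nonneg_of_mul_nonneg_right (factor ▸ hxy) hx)]
    _ ≤ x ^ α * (1 + α * (y / x)) := by gcongr
    _ = x ^ α + α * (y * x ^ (α - 1)) := by rw [rpow_sub_one hx.ne']; ring

theorem mul_rpow_sub_one_le_rpow (hα1 : α ≤ 1) (hx : 0 ≤ x) (hxy : x ≤ y) :
    x * y ^ (α - 1) ≤ x ^ α := by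
  rcases hx.eq_or_lt with rfl | hx_pos
  · simpa only [zero_mul] using rpow_nonneg le_rfl α
  calc x * y ^ (α - 1) ≤ x * x ^ (α - 1) :=
        mul_le_mul_of_nonneg_left (rpow_le_rpow_of_nonpos hx_pos hxy (sub_nonpos.2 hα1)) hx
    _ = x ^ α := by rw [rpow_sub_one hx_pos.ne', mul_div_cancel₀ _ hx_pos.ne']

theorem add_rpow_add_mul_min_rpow_le_s4 (hα : 0 ≤ α) (hα1 : α ≤ 1) (hx : 0 ≤ x) (hy : 0 ≤ y) :
    (x + y) ^ α + (1 - α) * min x y ^ α ≤ x ^ α + y ^ α := by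
  wlog hxy : x ≤ y generalizing x y
  · simpa only [add_comm, min_comm] using this hy hx (le_of_not_ge hxy)
  rw [min_eq_left hxy]
  rcases hy.eq_or_lt with rfl | hy_pos
  · obtain rfl : x = 0 := le_antisymm hxy hx
    rw [add_zero]
    linarith [mul_nonneg hα (rpow_nonneg hx α)]
  -- By concavity, `t ↦ t ^ α` lies below its tangent at the larger of the two points.
  have tangent : (y + x) ^ α ≤ y ^ α + α * (x * y ^ (α - 1)) :=
    add_rpow_le_rpow_add_mul_mul_rpow_sub_one hα hα1 hy_pos (add_nonneg hy hx)
  have slope : α * (x * y ^ (α - 1)) ≤ α * x ^ α :=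
    mul_le_mul_of_nonneg_left (mul_rpow_sub_one_le_rpow hα1 hx hxy) hα
  rw [add_comm x y]
  linarith

theorem rpow_add_mul_min_rpow_le_of_le_add (hα : 0 ≤ α) (hα1 : α ≤ 1) (hx : 0 ≤ x) (hy : 0 ≤ y)
    (hz : 0 ≤ z) (hzxy : z ≤ x + y) :
    z ^ α + (1 - α) * min x y ^ α ≤ x ^ α + y ^ α :=
  (add_le_add_left (rpow_le_rpow hz hzxy hα) _).trans
    (add_rpow_add_mul_min_rpow_le_s4 hα hα1 hx hy)

end

theorem abs_sub_rpow_add_rpow_ge_general {α k q ℓ : ℝ} (hα : 0 ≤ α) (hα1 : α ≤ 1)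
    (hkq : 0 ≤ k + q) (hkℓ : 0 ≤ k + ℓ) :
    (k + q) ^ α + (1 - α) * (min |q - ℓ| (k + ℓ)) ^ α ≤ |q - ℓ| ^ α + (k + ℓ) ^ α ∧
    Real.exp (-(|q - ℓ| ^ α) - (k + ℓ) ^ α) ≤ Real.exp (-((k + q) ^ α)) := by
  have triangle : k + q ≤ |q - ℓ| + (k + ℓ) := by linarith [le_abs_self (q - ℓ)]
  have main : (k + q) ^ α + (1 - α) * (min |q - ℓ| (k + ℓ)) ^ α ≤ |q - ℓ| ^ α + (k + ℓ) ^ α :=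
    rpow_add_mul_min_rpow_le_of_le_add hα hα1 (abs_nonneg _) hkℓ hkq triangle
  have gain_nonneg : 0 ≤ (1 - α) * (min |q - ℓ| (k + ℓ)) ^ α :=
    mul_nonneg (sub_nonneg.2 hα1) (rpow_nonneg (le_min (abs_nonneg _) hkℓ) α)
  exact ⟨main, exp_le_exp.2 (by linarith)⟩

/-- For `0 < α < 1` and nonnegative `k, q, ℓ`:
`|q−ℓ|^α + (k+ℓ)^α ≥ (k+q)^α + (1−α)·min{|q−ℓ|, k+ℓ}^α`, and in particular
`e^{−|q−ℓ|^α − (k+ℓ)^α} ≤ e^{−(k+q)^α}`. -/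
theorem abs_sub_rpow_add_rpow_ge (α k q ℓ : ℝ) (hα : 0 < α) (hα1 : α < 1)
    (hk : 0 ≤ k) (hq : 0 ≤ q) (hℓ : 0 ≤ ℓ) :
    (k + q) ^ α + (1 - α) * (min |q - ℓ| (k + ℓ)) ^ α ≤ |q - ℓ| ^ α + (k + ℓ) ^ α ∧
    Real.exp (-(|q - ℓ| ^ α) - (k + ℓ) ^ α) ≤ Real.exp (-((k + q) ^ α)) :=
  abs_sub_rpow_add_rpow_ge_general hα.le hα1.le (add_nonneg hk hq) (add_nonneg hk hℓ)
end

section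
/- Let 0<λ<α<1 with λ < α/2, and let ε > 0. Define I_N(ε) = ∫₀^∞ q^{N−1} e^{−q^α − ε q^λ} dq for N > 0. Then as N → ∞, I_N(ε) · α · e^{ε(N/α − 1)^{λ/α}} / Γ(N/α) → 1; that is, I_N(ε) ∼ α^{−1} Γ(N/α) e^{−ε(N/α−1)^{λ/α}}. -/
open Real MeasureTheory Filter

/-!
Substituting `t = q ^ α` and writing `μ = λ / α`, `m = N / α - 1`, the claim says that under the
Gamma weight `t ^ m * exp (-t)`, which peaks at `t = m`, the average of `exp (x * (t ^ μ - m ^ μ))`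
tends to `1`, where `x = -ε`. Concavity of `t ↦ t ^ μ` at `t = m` and convexity of
`u ↦ exp (μ * u)` at `u = log m` give
`μ * m ^ μ * log (t / m) ≤ t ^ μ - m ^ μ ≤ μ * m ^ (μ - 1) * (t - m)`,
and with either bound as tilt the integral is an explicit multiple of a Gamma function. By
log-convexity of `Γ`, the logarithm of the average is controlled by `c = x * μ * m ^ (μ - 1)` and
`m * c ^ 2`; the latter is of order `m ^ (2 * μ - 1)`, which tends to `0` because `μ < 1 / 2`.
-/

/-- The integrand of `Γ(s)`, tilted by the factor `exp (g t)`. For `g t = x * t ^ μ` this is the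
integrand of Faxén's integral `Fi(μ, s; x)`. -/
noncomputable def tiltedGammaIntegrand (s : ℝ) (g : ℝ → ℝ) (t : ℝ) : ℝ :=
  t ^ (s - 1) * exp (-t + g t)

/-- The integral of `t ^ (s - 1) * exp (-t + g t)` over the positive half-line, so that
`tiltedGammaIntegral s g / Γ(s)` is the average of `exp ∘ g` under the Gamma weight. -/
noncomputable def tiltedGammaIntegral (s : ℝ) (g : ℝ → ℝ) : ℝ :=
  ∫ t in Set.Ioi 0, tiltedGammaIntegrand s g t

section Comparison

variable {s : ℝ} {g h : ℝ → ℝ}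

lemma tiltedGammaIntegrand_nonneg {t : ℝ} (ht : 0 < t) : 0 ≤ tiltedGammaIntegrand s g t := by
  unfold tiltedGammaIntegrand
  positivity

lemma tiltedGammaIntegrand_le_of_le {t : ℝ} (ht : 0 < t) (hgh : g t ≤ h t) :
    tiltedGammaIntegrand s g t ≤ tiltedGammaIntegrand s h t := by
  unfold tiltedGammaIntegrand
  gcongr

lemma integrableOn_tiltedGammaIntegrand_of_le (hg : Measurable g) (hgh : ∀ t > 0, g t ≤ h t)
    (hh : IntegrableOn (tiltedGammaIntegrand s h) (Set.Ioi 0)) :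
    IntegrableOn (tiltedGammaIntegrand s g) (Set.Ioi 0) := by
  refine Integrable.mono' hh ?_ ?_
  · unfold tiltedGammaIntegrand
    fun_prop
  · filter_upwards [ae_restrict_mem measurableSet_Ioi] with t ht
    rw [norm_of_nonneg (tiltedGammaIntegrand_nonneg ht)]
    exact tiltedGammaIntegrand_le_of_le ht (hgh t ht)

lemma tiltedGammaIntegral_le_of_le (hgh : ∀ t > 0, g t ≤ h t)
    (hh : IntegrableOn (tiltedGammaIntegrand s h) (Set.Ioi 0)) :
    tiltedGammaIntegral s g ≤ tiltedGammaIntegral s h := by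
  refine integral_mono_of_nonneg ?_ hh ?_ <;>
    filter_upwards [ae_restrict_mem measurableSet_Ioi] with t ht
  · exact tiltedGammaIntegrand_nonneg ht
  · exact tiltedGammaIntegrand_le_of_le ht (hgh t ht)

end Comparison

section LinearTilt

variable {c : ℝ}

lemma tiltedGammaIntegrand_linear (s c m t : ℝ) :
    tiltedGammaIntegrand s (fun t ↦ c * (t - m)) t
      = exp (-(c * m)) * (t ^ (s - 1) * exp (-((1 - c) * t))) := by
  rw [tiltedGammaIntegrand, mul_left_comm, ← exp_add]
  ring_nf

lemma integrableOn_tiltedGammaIntegrand_linear {s : ℝ} (hs : 0 < s) (hc : c < 1) (m : ℝ) :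
    IntegrableOn (tiltedGammaIntegrand s fun t ↦ c * (t - m)) (Set.Ioi 0) := by
  have hint := integrableOn_rpow_mul_exp_neg_mul_rpow (s := s - 1) (p := 1) (b := 1 - c)
    (by linarith) one_pos (by linarith)
  simp only [rpow_one] at hint
  refine (hint.const_mul (exp (-(c * m)))).congr (.of_forall fun t ↦ ?_)
  simp only [tiltedGammaIntegrand_linear, neg_mul]

lemma tiltedGammaIntegral_linear {s : ℝ} (hs : 0 < s) (hc : c < 1) (m : ℝ) :
    tiltedGammaIntegral s (fun t ↦ c * (t - m))
      = Gamma s * (exp (-(c * m)) * (1 / (1 - c)) ^ s) := by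
  simp only [tiltedGammaIntegral, tiltedGammaIntegrand_linear]
  rw [integral_const_mul, integral_rpow_mul_exp_neg_mul_Ioi hs (sub_pos.2 hc)]
  ring

lemma exp_le_one_div_one_sub (hc : c < 1) : exp c ≤ 1 / (1 - c) := by
  rw [le_div_iff₀ (sub_pos.2 hc), ← le_div_iff₀' (exp_pos c), one_div, ← exp_neg]
  exact one_sub_le_exp_neg c

lemma one_div_one_sub_le_exp (hc : c < 1) : 1 / (1 - c) ≤ exp (c / (1 - c)) := by
  have hc' : 1 - c ≠ 0 := (sub_pos.2 hc).ne'
  calc 1 / (1 - c) = c / (1 - c) + 1 := by field_simp; ring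
    _ ≤ exp (c / (1 - c)) := add_one_le_exp _

lemma Gamma_mul_exp_le_tiltedGammaIntegral_linear {m : ℝ} (hm : 0 < m) (hc : c < 1) :
    Gamma (m + 1) * exp c ≤ tiltedGammaIntegral (m + 1) fun t ↦ c * (t - m) := by
  rw [tiltedGammaIntegral_linear (by positivity) hc]
  gcongr
  calc exp c = exp (-(c * m)) * exp c ^ (m + 1) := by
        rw [← exp_mul, ← exp_add]; ring_nf
    _ ≤ exp (-(c * m)) * (1 / (1 - c)) ^ (m + 1) := by
        gcongr; exact exp_le_one_div_one_sub hc

lemma tiltedGammaIntegral_linear_le {m : ℝ} (hm : 0 < m) (hc : c < 1) :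
    tiltedGammaIntegral (m + 1) (fun t ↦ c * (t - m))
      ≤ Gamma (m + 1) * exp ((c + m * c ^ 2) / (1 - c)) := by
  have hc' : 0 < 1 - c := sub_pos.2 hc
  rw [tiltedGammaIntegral_linear (by positivity) hc]
  gcongr
  calc exp (-(c * m)) * (1 / (1 - c)) ^ (m + 1)
      ≤ exp (-(c * m)) * exp (c / (1 - c)) ^ (m + 1) := by
        gcongr; exact one_div_one_sub_le_exp hc
    _ = exp ((c + m * c ^ 2) / (1 - c)) := by
        rw [← exp_mul, ← exp_add]
        congr 1
        field_simp
        ring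

end LinearTilt

section LogarithmicTilt

variable {s m p : ℝ}

lemma tiltedGammaIntegrand_log (hm : 0 < m) {t : ℝ} (ht : 0 < t) :
    tiltedGammaIntegrand s (fun t ↦ p * log (t / m)) t
      = m ^ (-p) * (exp (-t) * t ^ (s + p - 1)) := by
  have h_tilt : exp (p * log (t / m)) = t ^ p * m ^ (-p) := by
    rw [mul_comm, ← rpow_def_of_pos (by positivity), div_rpow ht.le hm.le, rpow_neg hm.le,
      div_eq_mul_inv]
  rw [tiltedGammaIntegrand, exp_add, h_tilt, add_sub_right_comm, rpow_add ht]
  ring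

lemma integrableOn_tiltedGammaIntegrand_log (hm : 0 < m) (hsp : 0 < s + p) :
    IntegrableOn (tiltedGammaIntegrand s fun t ↦ p * log (t / m)) (Set.Ioi 0) :=
  IntegrableOn.congr_fun ((GammaIntegral_convergent hsp).const_mul (m ^ (-p)))
    (fun _ ht ↦ (tiltedGammaIntegrand_log hm ht).symm) measurableSet_Ioi

lemma tiltedGammaIntegral_log (hm : 0 < m) (hsp : 0 < s + p) :
    tiltedGammaIntegral s (fun t ↦ p * log (t / m)) = m ^ (-p) * Gamma (s + p) := by
  rw [tiltedGammaIntegral, Gamma_eq_integral hsp, ← integral_const_mul]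
  exact setIntegral_congr_fun measurableSet_Ioi fun _ ht ↦ tiltedGammaIntegrand_log hm ht

lemma rpow_mul_Gamma_add_one_le {y q : ℝ} (hy : 0 < y) (hq : 0 ≤ q) :
    y ^ q * Gamma (y + 1) ≤ Gamma (y + 1 + q) := by
  obtain rfl | hq := hq.eq_or_lt
  · simp
  have hΓ : 0 < Gamma y := Gamma_pos_of_pos hy
  have hΓ₁ : 0 < Gamma (y + 1) := Gamma_pos_of_pos (by positivity)
  have hΓq : 0 < Gamma (y + 1 + q) := Gamma_pos_of_pos (by positivity)
  have h_slope := convexOn_log_Gamma.slope_mono_adjacent (x := y) (y := y + 1) (z := y + 1 + q)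
    hy (show 0 < y + 1 + q by positivity) (by linarith) (by linarith)
  have h_unit : log (Gamma (y + 1)) - log (Gamma y) = log y := by
    rw [Gamma_add_one hy.ne', log_mul hy.ne' hΓ.ne', add_sub_cancel_right]
  simp only [Function.comp_apply, add_sub_cancel_left, div_one, h_unit] at h_slope
  rw [le_div_iff₀ hq] at h_slope
  rw [← log_le_log_iff (by positivity) hΓq, log_mul (by positivity) hΓ₁.ne', log_rpow hy]
  linarith

lemma Gamma_le_tiltedGammaIntegral_log (hm : 0 < m) (hp : 0 ≤ p) :
    Gamma (m + 1) ≤ tiltedGammaIntegral (m + 1) fun t ↦ p * log (t / m) := by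
  rw [tiltedGammaIntegral_log hm (by positivity), rpow_neg hm.le, ← div_eq_inv_mul,
    le_div_iff₀' (by positivity)]
  exact rpow_mul_Gamma_add_one_le hm hp

lemma tiltedGammaIntegral_log_le {c : ℝ} (hm : 0 < m) (hc₀ : 0 ≤ c) (hc₁ : c < 1) :
    tiltedGammaIntegral (m + 1) (fun t ↦ -(c * m) * log (t / m))
      ≤ Gamma (m + 1) * exp (m * c ^ 2 / (1 - c)) := by
  have hc : 0 < 1 - c := sub_pos.2 hc₁
  have h_shift : m + 1 + -(c * m) = m * (1 - c) + 1 := by ring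
  rw [tiltedGammaIntegral_log hm (h_shift ▸ by positivity), h_shift, neg_neg]
  calc m ^ (c * m) * Gamma (m * (1 - c) + 1)
      = (1 / (1 - c)) ^ (c * m) * ((m * (1 - c)) ^ (c * m) * Gamma (m * (1 - c) + 1)) := by
        rw [← mul_assoc, ← mul_rpow (by positivity) (by positivity)]
        congr 2
        field_simp
    _ ≤ exp (c / (1 - c)) ^ (c * m) * Gamma (m * (1 - c) + 1 + c * m) := by
        gcongr
        · exact one_div_one_sub_le_exp hc₁
        · exact rpow_mul_Gamma_add_one_le (by positivity) (by positivity)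
    _ = Gamma (m + 1) * exp (m * c ^ 2 / (1 - c)) := by
        rw [← exp_mul, mul_comm]
        ring_nf

end LogarithmicTilt

section PowerTilt

variable {m t μ x : ℝ}

lemma rpow_sub_rpow_le_tangent (hm : 0 < m) (ht : 0 ≤ t) (hμ₀ : 0 ≤ μ) (hμ₁ : μ ≤ 1) :
    t ^ μ - m ^ μ ≤ μ * m ^ (μ - 1) * (t - m) := by
  have h_bernoulli : (1 + (t / m - 1)) ^ μ ≤ 1 + μ * (t / m - 1) :=
    rpow_one_add_le_one_add_mul_self (by linarith [div_nonneg ht hm.le]) hμ₀ hμ₁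
  rw [add_sub_cancel, div_rpow ht hm.le, div_le_iff₀ (by positivity)] at h_bernoulli
  calc t ^ μ - m ^ μ ≤ (1 + μ * (t / m - 1)) * m ^ μ - m ^ μ := by gcongr
    _ = μ * m ^ (μ - 1) * (t - m) := by rw [rpow_sub_one hm.ne']; field_simp; ring

lemma mul_log_div_le_rpow_sub_rpow (hm : 0 < m) (ht : 0 < t) (μ : ℝ) :
    μ * m ^ μ * log (t / m) ≤ t ^ μ - m ^ μ := by
  have h_exp : log (t / m) * μ + 1 ≤ t ^ μ / m ^ μ := by
    rw [← div_rpow ht.le hm.le, rpow_def_of_pos (by positivity)]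
    exact add_one_le_exp _
  rw [le_div_iff₀ (by positivity)] at h_exp
  linarith

/-- The slope at `t = m` of the power tilt `t ↦ x * (t ^ μ - m ^ μ)`, and hence of its linear
majorant or minorant; it measures how far the tilt moves the Gamma weight. -/
noncomputable def powerTiltSlope (x μ m : ℝ) : ℝ :=
  x * (μ * m ^ (μ - 1))

lemma powerTiltSlope_nonneg (hx : 0 ≤ x) (hμ : 0 ≤ μ) (hm : 0 ≤ m) :
    0 ≤ powerTiltSlope x μ m := by
  unfold powerTiltSlope
  positivity

lemma powerTiltSlope_nonpos (hx : x ≤ 0) (hμ : 0 ≤ μ) (hm : 0 ≤ m) :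
    powerTiltSlope x μ m ≤ 0 :=
  mul_nonpos_of_nonpos_of_nonneg hx (by positivity)

lemma powerTiltSlope_mul_self (hm : 0 < m) (x μ : ℝ) :
    powerTiltSlope x μ m * m = x * (μ * m ^ μ) := by
  rw [powerTiltSlope, rpow_sub_one hm.ne']
  field_simp

lemma mul_rpow_sub_le_linear (hx : 0 ≤ x) (hm : 0 < m) (ht : 0 ≤ t) (hμ₀ : 0 ≤ μ) (hμ₁ : μ ≤ 1) :
    x * (t ^ μ - m ^ μ) ≤ powerTiltSlope x μ m * (t - m) := by
  rw [powerTiltSlope, mul_assoc]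
  exact mul_le_mul_of_nonneg_left (rpow_sub_rpow_le_tangent hm ht hμ₀ hμ₁) hx

lemma linear_le_mul_rpow_sub (hx : x ≤ 0) (hm : 0 < m) (ht : 0 ≤ t) (hμ₀ : 0 ≤ μ) (hμ₁ : μ ≤ 1) :
    powerTiltSlope x μ m * (t - m) ≤ x * (t ^ μ - m ^ μ) := by
  rw [powerTiltSlope, mul_assoc]
  exact mul_le_mul_of_nonpos_left (rpow_sub_rpow_le_tangent hm ht hμ₀ hμ₁) hx

lemma log_le_mul_rpow_sub (hx : 0 ≤ x) (hm : 0 < m) (ht : 0 < t) (μ : ℝ) :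
    powerTiltSlope x μ m * m * log (t / m) ≤ x * (t ^ μ - m ^ μ) := by
  rw [powerTiltSlope_mul_self hm, mul_assoc]
  exact mul_le_mul_of_nonneg_left (mul_log_div_le_rpow_sub_rpow hm ht μ) hx

lemma mul_rpow_sub_le_log (hx : x ≤ 0) (hm : 0 < m) (ht : 0 < t) (μ : ℝ) :
    x * (t ^ μ - m ^ μ) ≤ powerTiltSlope x μ m * m * log (t / m) := by
  rw [powerTiltSlope_mul_self hm, mul_assoc]
  exact mul_le_mul_of_nonpos_left (mul_log_div_le_rpow_sub_rpow hm ht μ) hx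

lemma Gamma_mul_exp_le_tiltedGammaIntegral_rpow (hm : 0 < m) (hμ₀ : 0 ≤ μ) (hμ₁ : μ ≤ 1)
    (hc : |powerTiltSlope x μ m| < 1) :
    Gamma (m + 1) * exp (-|powerTiltSlope x μ m|)
      ≤ tiltedGammaIntegral (m + 1) fun t ↦ x * (t ^ μ - m ^ μ) := by
  have h_meas : Measurable fun t : ℝ ↦ x * (t ^ μ - m ^ μ) := by fun_prop
  have hs : 0 < m + 1 := by positivity
  obtain hx | hx := le_total 0 x
  · have hc₀ := powerTiltSlope_nonneg hx hμ₀ hm.le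
    have h_int := integrableOn_tiltedGammaIntegrand_of_le h_meas
      (fun t ht ↦ mul_rpow_sub_le_linear hx hm ht.le hμ₀ hμ₁)
      (integrableOn_tiltedGammaIntegrand_linear hs (abs_lt.1 hc).2 m)
    calc Gamma (m + 1) * exp (-|powerTiltSlope x μ m|)
        ≤ Gamma (m + 1) :=
          mul_le_of_le_one_right (Gamma_pos_of_pos hs).le (by simp)
      _ ≤ tiltedGammaIntegral (m + 1) fun t ↦ powerTiltSlope x μ m * m * log (t / m) :=
          Gamma_le_tiltedGammaIntegral_log hm (by positivity)
      _ ≤ tiltedGammaIntegral (m + 1) fun t ↦ x * (t ^ μ - m ^ μ) :=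
          tiltedGammaIntegral_le_of_le (fun t ht ↦ log_le_mul_rpow_sub hx hm ht μ) h_int
  · have h_exponent : 0 < m + 1 + powerTiltSlope x μ m * m := by nlinarith [(abs_lt.1 hc).1]
    have h_int := integrableOn_tiltedGammaIntegrand_of_le h_meas
      (fun t ht ↦ mul_rpow_sub_le_log hx hm ht μ)
      (integrableOn_tiltedGammaIntegrand_log hm h_exponent)
    rw [abs_of_nonpos (powerTiltSlope_nonpos hx hμ₀ hm.le), neg_neg]
    calc Gamma (m + 1) * exp (powerTiltSlope x μ m)
        ≤ tiltedGammaIntegral (m + 1) fun t ↦ powerTiltSlope x μ m * (t - m) :=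
          Gamma_mul_exp_le_tiltedGammaIntegral_linear hm (abs_lt.1 hc).2
      _ ≤ tiltedGammaIntegral (m + 1) fun t ↦ x * (t ^ μ - m ^ μ) :=
          tiltedGammaIntegral_le_of_le
            (fun t ht ↦ linear_le_mul_rpow_sub hx hm ht.le hμ₀ hμ₁) h_int

lemma tiltedGammaIntegral_rpow_le (hm : 0 < m) (hμ₀ : 0 ≤ μ) (hμ₁ : μ ≤ 1)
    (hc : |powerTiltSlope x μ m| < 1) :
    tiltedGammaIntegral (m + 1) (fun t ↦ x * (t ^ μ - m ^ μ))
      ≤ Gamma (m + 1) * exp ((|powerTiltSlope x μ m| + m * |powerTiltSlope x μ m| ^ 2)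
          / (1 - |powerTiltSlope x μ m|)) := by
  obtain hx | hx := le_total 0 x
  · rw [abs_of_nonneg (powerTiltSlope_nonneg hx hμ₀ hm.le)] at hc ⊢
    calc tiltedGammaIntegral (m + 1) (fun t ↦ x * (t ^ μ - m ^ μ))
        ≤ tiltedGammaIntegral (m + 1) fun t ↦ powerTiltSlope x μ m * (t - m) :=
          tiltedGammaIntegral_le_of_le
            (fun t ht ↦ mul_rpow_sub_le_linear hx hm ht.le hμ₀ hμ₁)
            (integrableOn_tiltedGammaIntegrand_linear (by positivity) hc m)
      _ ≤ _ := tiltedGammaIntegral_linear_le hm hc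
  · have h_coeff : powerTiltSlope x μ m * m = -(|powerTiltSlope x μ m| * m) := by
      rw [abs_of_nonpos (powerTiltSlope_nonpos hx hμ₀ hm.le)]; ring
    calc tiltedGammaIntegral (m + 1) (fun t ↦ x * (t ^ μ - m ^ μ))
        ≤ tiltedGammaIntegral (m + 1) fun t ↦ -(|powerTiltSlope x μ m| * m) * log (t / m) :=
          tiltedGammaIntegral_le_of_le
            (fun t ht ↦ h_coeff ▸ mul_rpow_sub_le_log hx hm ht μ)
            (integrableOn_tiltedGammaIntegrand_log hm (by nlinarith))
      _ ≤ Gamma (m + 1) * exp (m * |powerTiltSlope x μ m| ^ 2 / (1 - |powerTiltSlope x μ m|)) :=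
          tiltedGammaIntegral_log_le hm (abs_nonneg _) hc
      _ ≤ _ := by
          gcongr
          exact le_add_of_nonneg_left (abs_nonneg _)

end PowerTilt

section Limit

variable {μ : ℝ}

lemma tendsto_abs_powerTiltSlope (x : ℝ) (hμ : μ < 1) :
    Tendsto (fun m ↦ |powerTiltSlope x μ m|) atTop (nhds 0) := by
  have h_rpow : Tendsto (fun m : ℝ ↦ m ^ (μ - 1)) atTop (nhds 0) := by
    simpa only [neg_sub] using tendsto_rpow_neg_atTop (sub_pos.2 hμ)
  simpa [powerTiltSlope] using ((h_rpow.const_mul μ).const_mul x).abs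

lemma tendsto_mul_abs_powerTiltSlope_sq (x : ℝ) (hμ : μ < 1 / 2) :
    Tendsto (fun m ↦ m * |powerTiltSlope x μ m| ^ 2) atTop (nhds 0) := by
  have h_rpow : Tendsto (fun m : ℝ ↦ (x * μ) ^ 2 * m ^ (2 * μ - 1)) atTop (nhds 0) := by
    simpa only [neg_sub, mul_zero] using
      (tendsto_rpow_neg_atTop (y := 1 - 2 * μ) (by linarith)).const_mul ((x * μ) ^ 2)
  refine h_rpow.congr' ?_
  filter_upwards [eventually_gt_atTop 0] with m hm
  rw [sq_abs, powerTiltSlope, rpow_sub_one hm.ne', rpow_sub_one hm.ne', two_mul, rpow_add hm]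
  field_simp

theorem tendsto_tiltedGammaIntegral_rpow_div_Gamma (x : ℝ) (hμ₀ : 0 ≤ μ) (hμ : μ < 1 / 2) :
    Tendsto (fun m ↦ tiltedGammaIntegral (m + 1) (fun t ↦ x * (t ^ μ - m ^ μ)) / Gamma (m + 1))
      atTop (nhds 1) := by
  have h_slope := tendsto_abs_powerTiltSlope x (hμ.trans one_half_lt_one)
  have h_lower : Tendsto (fun m ↦ exp (-|powerTiltSlope x μ m|)) atTop (nhds 1) := by
    simpa using h_slope.neg.rexp
  have h_upper : Tendsto (fun m ↦ exp ((|powerTiltSlope x μ m| + m * |powerTiltSlope x μ m| ^ 2)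
      / (1 - |powerTiltSlope x μ m|))) atTop (nhds 1) := by
    simpa using ((h_slope.add (tendsto_mul_abs_powerTiltSlope_sq x hμ)).div
      (h_slope.const_sub 1) (by simp)).rexp
  refine tendsto_of_tendsto_of_tendsto_of_le_of_le' h_lower h_upper ?_ ?_ <;>
    filter_upwards [eventually_gt_atTop 0, h_slope.eventually_lt_const one_pos] with m hm hc
  · rw [le_div_iff₀' (Gamma_pos_of_pos (by positivity))]
    exact Gamma_mul_exp_le_tiltedGammaIntegral_rpow hm hμ₀ (by linarith) hc
  · rw [div_le_iff₀' (Gamma_pos_of_pos (by positivity))]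
    exact tiltedGammaIntegral_rpow_le hm hμ₀ (by linarith) hc

end Limit

lemma integral_rpow_mul_exp_eq_tiltedGammaIntegral {α : ℝ} (hα : 0 < α) (lam ε N b : ℝ) :
    (∫ q in Set.Ioi (0 : ℝ), q ^ (N - 1) * exp (-(q ^ α) - ε * q ^ lam)) * α * exp (ε * b)
      = tiltedGammaIntegral (N / α) fun t ↦ -ε * (t ^ (lam / α) - b) := by
  rw [tiltedGammaIntegral, ← integral_comp_rpow_Ioi_of_pos (g := tiltedGammaIntegrand (N / α) _) hα,
    ← integral_mul_const, ← integral_mul_const]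
  refine setIntegral_congr_fun measurableSet_Ioi fun q (hq : 0 < q) ↦ ?_
  have h_lam : (q ^ α) ^ (lam / α) = q ^ lam := by
    rw [← rpow_mul hq.le, mul_div_cancel₀ _ hα.ne']
  have h_jacobian : q ^ (α - 1) * (q ^ α) ^ (N / α - 1) = q ^ (N - 1) := by
    rw [← rpow_mul hq.le, ← rpow_add hq]
    congr 1
    field_simp
    ring
  have h_exp :
      exp (-(q ^ α) + -ε * (q ^ lam - b)) = exp (-(q ^ α) - ε * q ^ lam) * exp (ε * b) := by
    rw [← exp_add]
    ring_nf
  simp only [tiltedGammaIntegrand, smul_eq_mul, h_lam, h_exp, ← h_jacobian]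
  ring

theorem IN_asymptotics_small_lambda_general
    (α lam ε : ℝ) (hlam : 0 ≤ lam) (hhalf : lam < α / 2) :
    Tendsto (fun N : ℝ =>
        (∫ q in Set.Ioi (0:ℝ), q ^ (N - 1) * Real.exp (-(q ^ α) - ε * q ^ lam))
          * α * Real.exp (ε * (N / α - 1) ^ (lam / α)) / Real.Gamma (N / α))
      atTop (nhds 1) := by
  have hα : 0 < α := by linarith
  have h_peak : Tendsto (fun N : ℝ ↦ N / α - 1) atTop atTop :=
    tendsto_atTop_add_const_right _ _ (tendsto_id.atTop_div_const hα)
  have h_half : lam / α < 1 / 2 := by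
    rw [div_lt_iff₀ hα]
    linarith
  have h_lim := (tendsto_tiltedGammaIntegral_rpow_div_Gamma (-ε)
    (div_nonneg hlam hα.le) h_half).comp h_peak
  simpa only [integral_rpow_mul_exp_eq_tiltedGammaIntegral hα, Function.comp_def,
    sub_add_cancel] using h_lim

/-- For `0 < λ < α < 1` with `λ < α/2` and `ε > 0`,
`I_N(ε) = ∫₀^∞ q^{N−1} e^{−q^α − ε q^λ} dq ∼ α⁻¹ Γ(N/α) e^{−ε(N/α−1)^{λ/α}}` as `N → ∞`. -/
theorem IN_asymptotics_small_lambda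
    (α lam ε : ℝ) (hlam : 0 < lam) (hlamα : lam < α) (hα1 : α < 1)
    (hhalf : lam < α / 2) (hε : 0 < ε) :
    Tendsto (fun N : ℝ =>
        (∫ q in Set.Ioi (0:ℝ), q ^ (N - 1) * Real.exp (-(q ^ α) - ε * q ^ lam))
          * α * Real.exp (ε * (N / α - 1) ^ (lam / α)) / Real.Gamma (N / α))
      atTop (nhds 1) :=
  IN_asymptotics_small_lambda_general α lam ε hlam.le hhalf
end

section
/- Let 0<α<1 and λ = α/2, and let ε > 0. Define I_N(ε) = ∫₀^∞ q^{N−1} e^{−q^α − ε q^λ} dq for N > 0. Then as N → ∞, I_N(ε) ∼ α^{−1} e^{ε²/8} Γ(N/α) e^{−ε√(N/α − 1)}, i.e., the ratio of the two sides tends to 1. -/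
open Real MeasureTheory Filter
open scoped Topology

/-!
The substitution `y = q ^ (α / 2)` turns `I_N(ε)` into `2 / α` times the integral of
`y ^ (2s² + 1) exp (-y² - εy)` over `y > 0`, where `s = √(N / α - 1)`. The factor
`y ^ (2s²) exp (-y²)` peaks at `y = s`, and dividing the integrand by its value at `s` leaves,
in the variable `t = y - s`, a function converging to `exp (-2t² - εt)`; so the integral is
asymptotic to `exp (ε² / 8) √(π / 2)` times the integrand at `s`. For `ε = 0` the integral is
`Γ(N / α) / 2`, and dividing the two cases eliminates the powers of `s` without Stirling's formula.
-/

lemma log_one_sub_add_sum_range_isBigO (n : ℕ) :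
    (fun x : ℝ => log (1 - x) + ∑ i ∈ Finset.range n, x ^ (i + 1) / (i + 1))
      =O[𝓝 0] fun x => x ^ (n + 1) := by
  refine Asymptotics.IsBigO.of_bound 2 ?_
  filter_upwards [Metric.ball_mem_nhds (0 : ℝ) one_half_pos] with x hx
  have hx : |x| < 1 / 2 := by simpa using hx
  calc ‖log (1 - x) + ∑ i ∈ Finset.range n, x ^ (i + 1) / (i + 1)‖
      ≤ |x| ^ (n + 1) / (1 - |x|) := by
        rw [norm_eq_abs, add_comm]
        exact abs_log_sub_add_sum_range_le (by linarith) n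
    _ ≤ |x| ^ (n + 1) / (1 / 2) := by gcongr; linarith
    _ = 2 * ‖x ^ (n + 1)‖ := by rw [norm_pow, norm_eq_abs]; ring

lemma tendsto_sq_mul_log_one_add_div_sub_atTop (t : ℝ) :
    Tendsto (fun s : ℝ => s ^ 2 * log (1 + t / s) - s * t) atTop (𝓝 (-(t ^ 2 / 2))) := by
  have hlog := (log_one_sub_add_sum_range_isBigO 2).comp_tendsto
    (tendsto_const_nhds.div_atTop tendsto_id : Tendsto (fun s : ℝ => -t / s) atTop (𝓝 0))
  have hcube : Tendsto (fun s : ℝ => s ^ 2 * (-t / s) ^ 3) atTop (𝓝 0) := by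
    refine (tendsto_const_nhds.div_atTop tendsto_id :
      Tendsto (fun s : ℝ => (-t) ^ 3 / s) atTop (𝓝 0)).congr' ?_
    filter_upwards [eventually_ne_atTop 0] with s hs
    field_simp
  have hrem := ((Asymptotics.isBigO_refl (fun s : ℝ => s ^ 2) atTop).mul hlog).trans_tendsto hcube
  rw [← tendsto_sub_nhds_zero_iff]
  refine hrem.congr' ?_
  filter_upwards [eventually_ne_atTop 0] with s hs
  simp only [Function.comp_apply, Finset.sum_range_succ, Finset.sum_range_zero, neg_div,
    sub_neg_eq_add]
  push_cast
  field_simp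
  ring

lemma sq_mul_log_one_add_div_le {s t : ℝ} (hs : 0 < s) (hst : 0 < s + t) :
    s ^ 2 * log (1 + t / s) ≤ s * t := by
  have hpos : 0 < 1 + t / s := by rw [one_add_div hs.ne']; positivity
  calc s ^ 2 * log (1 + t / s) ≤ s ^ 2 * (1 + t / s - 1) := by
        gcongr; exact log_le_sub_one_of_pos hpos
    _ = s * t := by field_simp; ring

lemma exp_neg_mul_sq_sub_mul_eq {b : ℝ} (hb : b ≠ 0) (c t : ℝ) :
    exp (-b * t ^ 2 - c * t) =
      exp (c ^ 2 / (4 * b)) * exp (-b * (t + c / (2 * b)) ^ 2) := by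
  rw [← exp_add]
  congr 1
  field_simp
  ring

lemma integral_exp_neg_mul_sq_sub_mul {b : ℝ} (hb : b ≠ 0) (c : ℝ) :
    ∫ t : ℝ, exp (-b * t ^ 2 - c * t) = exp (c ^ 2 / (4 * b)) * √(π / b) := by
  simp_rw [exp_neg_mul_sq_sub_mul_eq hb c]
  rw [integral_const_mul, integral_add_right_eq_self (fun u : ℝ => exp (-b * u ^ 2)),
    integral_gaussian]

lemma integrable_exp_neg_mul_sq_sub_mul {b : ℝ} (hb : 0 < b) (c : ℝ) :
    Integrable fun t : ℝ => exp (-b * t ^ 2 - c * t) := by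
  simp_rw [exp_neg_mul_sq_sub_mul_eq hb.ne' c]
  exact ((integrable_exp_neg_mul_sq hb).comp_add_right _).const_mul _

lemma integral_rpow_smul_comp_rpow_Ioi {E : Type*} [NormedAddCommGroup E] [NormedSpace ℝ E]
    (g : ℝ → E) {p : ℝ} (hp : p ≠ 0) (a : ℝ) :
    ∫ x in Set.Ioi 0, x ^ (a - 1) • g (x ^ p) =
      |p|⁻¹ • ∫ y in Set.Ioi 0, y ^ (a / p - 1) • g y := by
  rw [← integral_comp_rpow_Ioi (fun y => y ^ (a / p - 1) • g y) hp, ← integral_smul]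
  refine setIntegral_congr_fun measurableSet_Ioi fun x (hx : 0 < x) => ?_
  have hpow : x ^ (a - 1) = x ^ (p - 1) * (x ^ p) ^ (a / p - 1) := by
    rw [← rpow_mul hx.le, ← rpow_add hx]
    congr 1
    field_simp
    ring
  simp only [hpow, mul_smul]
  rw [inv_smul_smul₀ (abs_ne_zero.mpr hp)]

/-- The integrand of `I_N(ε)` after the substitution `y = q ^ (α / 2)`, up to the factor `2 / α`.
The exponent is parametrised by the maximum point `s = √(N / α - 1)` of
`y ^ (2 * s ^ 2) * exp (-y ^ 2)`, so that `2 * s ^ 2 + 1 = 2 * N / α - 1`. -/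
noncomputable def faxenIntegrand (ε s y : ℝ) : ℝ :=
  y ^ (2 * s ^ 2 + 1) * exp (-y ^ 2 - ε * y)

namespace faxenIntegrand

lemma pos (ε s : ℝ) {y : ℝ} (hy : 0 < y) : 0 < faxenIntegrand ε s y := by
  unfold faxenIntegrand
  positivity

lemma eq_zero_mul_exp (ε s y : ℝ) :
    faxenIntegrand ε s y = faxenIntegrand 0 s y * exp (-ε * y) := by
  rw [faxenIntegrand, faxenIntegrand, mul_assoc, ← exp_add]
  ring_nf

lemma add_div_self (ε : ℝ) {s t : ℝ} (hs : 0 < s) (hst : 0 < s + t) :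
    faxenIntegrand ε s (s + t) / faxenIntegrand ε s s =
      (1 + t / s) * exp (2 * (s ^ 2 * log (1 + t / s) - s * t) - t ^ 2 - ε * t) := by
  have hpos : 0 < 1 + t / s := by rw [one_add_div hs.ne']; positivity
  have hpow : (1 + t / s) ^ (2 * s ^ 2 + 1) =
      (1 + t / s) * exp (2 * (s ^ 2 * log (1 + t / s))) := by
    rw [rpow_add_one hpos.ne', rpow_def_of_pos hpos]
    ring_nf
  calc faxenIntegrand ε s (s + t) / faxenIntegrand ε s s
      = (1 + t / s) ^ (2 * s ^ 2 + 1) *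
          exp (-(s + t) ^ 2 - ε * (s + t) - (-s ^ 2 - ε * s)) := by
        rw [faxenIntegrand, faxenIntegrand, mul_div_mul_comm, ← div_rpow hst.le hs.le, ← exp_sub,
          one_add_div hs.ne']
    _ = _ := by
        rw [hpow, mul_assoc, ← exp_add]
        ring_nf

lemma tendsto_add_div_self (ε t : ℝ) :
    Tendsto (fun s => faxenIntegrand ε s (s + t) / faxenIntegrand ε s s) atTop
      (𝓝 (exp (-2 * t ^ 2 - ε * t))) := by
  have hfactor : Tendsto (fun s : ℝ => 1 + t / s) atTop (𝓝 (1 + 0)) :=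
    (tendsto_const_nhds.div_atTop tendsto_id).const_add 1
  have hexponent := (((tendsto_sq_mul_log_one_add_div_sub_atTop t).const_mul 2).sub_const
    (t ^ 2)).sub_const (ε * t)
  have hlim := hfactor.mul ((continuous_exp.tendsto _).comp hexponent)
  rw [show (1 + 0) * exp (2 * -(t ^ 2 / 2) - t ^ 2 - ε * t) = exp (-2 * t ^ 2 - ε * t) by
    ring_nf] at hlim
  refine hlim.congr' ?_
  filter_upwards [eventually_gt_atTop 0, eventually_gt_atTop (-t)] with s hs hst
  exact (add_div_self ε hs (neg_lt_iff_pos_add.mp hst)).symm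

lemma add_div_self_le (ε : ℝ) {s t : ℝ} (hs : 1 ≤ s) (hst : 0 < s + t) :
    faxenIntegrand ε s (s + t) / faxenIntegrand ε s s ≤
      exp (-1 * t ^ 2 - (ε - 1) * t) + exp (-1 * t ^ 2 - (ε + 1) * t) := by
  have hs₀ : 0 < s := by linarith
  have hfactor : 1 + t / s ≤ exp t + exp (-t) := by
    calc 1 + t / s ≤ 1 + |t| := by
          gcongr
          calc t / s ≤ |t| / s := by gcongr; exact le_abs_self t
            _ ≤ |t| := div_le_self (abs_nonneg t) hs
      _ ≤ exp |t| := by linarith [add_one_le_exp |t|]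
      _ ≤ exp t + exp (-t) := exp_abs_le t
  calc faxenIntegrand ε s (s + t) / faxenIntegrand ε s s
      = (1 + t / s) * exp (2 * (s ^ 2 * log (1 + t / s) - s * t) - t ^ 2 - ε * t) :=
        add_div_self ε hs₀ hst
    _ ≤ (exp t + exp (-t)) * exp (-t ^ 2 - ε * t) := by
        gcongr
        linarith [sq_mul_log_one_add_div_le hs₀ hst]
    _ = exp (-1 * t ^ 2 - (ε - 1) * t) + exp (-1 * t ^ 2 - (ε + 1) * t) := by
        rw [add_mul, ← exp_add, ← exp_add]
        ring_nf

lemma integral_div_self (ε s : ℝ) :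
    (∫ y in Set.Ioi 0, faxenIntegrand ε s y) / faxenIntegrand ε s s =
      ∫ t, (Set.Ioi 0).indicator (faxenIntegrand ε s) (s + t) / faxenIntegrand ε s s := by
  rw [integral_div, integral_add_left_eq_self ((Set.Ioi 0).indicator (faxenIntegrand ε s)),
    integral_indicator measurableSet_Ioi]

lemma norm_indicator_add_div_self_le (ε : ℝ) {s : ℝ} (hs : 1 ≤ s) (t : ℝ) :
    ‖(Set.Ioi 0).indicator (faxenIntegrand ε s) (s + t) / faxenIntegrand ε s s‖ ≤
      exp (-1 * t ^ 2 - (ε - 1) * t) + exp (-1 * t ^ 2 - (ε + 1) * t) := by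
  by_cases hst : 0 < s + t
  · rw [Set.indicator_of_mem (Set.mem_Ioi.mpr hst),
      norm_of_nonneg (div_pos (pos ε s hst) (pos ε s (by linarith))).le]
    exact add_div_self_le ε hs hst
  · rw [Set.indicator_of_notMem (by simpa using hst), zero_div, norm_zero]
    positivity

theorem tendsto_integral_div_self (ε : ℝ) :
    Tendsto (fun s => (∫ y in Set.Ioi 0, faxenIntegrand ε s y) / faxenIntegrand ε s s) atTop
      (𝓝 (exp (ε ^ 2 / 8) * √(π / 2))) := by
  have hgauss : ∫ t, exp (-2 * t ^ 2 - ε * t) = exp (ε ^ 2 / 8) * √(π / 2) := by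
    rw [integral_exp_neg_mul_sq_sub_mul two_ne_zero]
    norm_num
  simp_rw [← hgauss, integral_div_self]
  refine tendsto_integral_filter_of_dominated_convergence _ ?_ ?_
    ((integrable_exp_neg_mul_sq_sub_mul one_pos (ε - 1)).add
      (integrable_exp_neg_mul_sq_sub_mul one_pos (ε + 1))) ?_
  · refine Eventually.of_forall fun s => Measurable.aestronglyMeasurable ?_
    have hmeas : Measurable (faxenIntegrand ε s) := by unfold faxenIntegrand; fun_prop
    exact ((hmeas.indicator measurableSet_Ioi).comp (measurable_const_add s)).div_const _
  · filter_upwards [eventually_ge_atTop 1] with s hs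
    exact Eventually.of_forall (norm_indicator_add_div_self_le ε hs)
  · refine Eventually.of_forall fun t => (tendsto_add_div_self ε t).congr' ?_
    filter_upwards [eventually_gt_atTop (-t)] with s hst
    rw [Set.indicator_of_mem (Set.mem_Ioi.mpr (neg_lt_iff_pos_add.mp hst))]

lemma integral_zero (s : ℝ) :
    ∫ y in Set.Ioi 0, faxenIntegrand 0 s y = Gamma (s ^ 2 + 1) / 2 := by
  have h := integral_rpow_mul_exp_neg_rpow two_pos
    (show -1 < 2 * s ^ 2 + 1 by nlinarith [sq_nonneg s])
  rw [show (2 * s ^ 2 + 1 + 1) / 2 = s ^ 2 + 1 by ring] at h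
  simpa [faxenIntegrand, div_eq_inv_mul] using h

theorem tendsto_integral_div_Gamma_mul_exp (ε : ℝ) :
    Tendsto (fun s => (∫ y in Set.Ioi 0, faxenIntegrand ε s y) /
      (Gamma (s ^ 2 + 1) / 2 * exp (-ε * s))) atTop (𝓝 (exp (ε ^ 2 / 8))) := by
  have hlim := (tendsto_integral_div_self ε).div (tendsto_integral_div_self 0) (by positivity)
  rw [show exp (ε ^ 2 / 8) * √(π / 2) / (exp (0 ^ 2 / 8) * √(π / 2)) = exp (ε ^ 2 / 8) by
    simp [pi_ne_zero, pi_pos.le]] at hlim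
  refine hlim.congr' ?_
  filter_upwards [eventually_gt_atTop 0] with s hs
  have hne : faxenIntegrand 0 s s ≠ 0 := (pos 0 s hs).ne'
  simp only [Pi.div_apply, integral_zero, eq_zero_mul_exp ε s s]
  field_simp

end faxenIntegrand

lemma integral_rpow_mul_exp_neg_rpow_sub_rpow_half {α : ℝ} (hα : 0 < α) (ε N : ℝ)
    (hN : α ≤ N) :
    ∫ q in Set.Ioi 0, q ^ (N - 1) * exp (-(q ^ α) - ε * q ^ (α / 2)) =
      2 / α * ∫ y in Set.Ioi 0, faxenIntegrand ε √(N / α - 1) y := by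
  have hexponent : 2 * √(N / α - 1) ^ 2 + 1 = N / (α / 2) - 1 := by
    rw [sq_sqrt (sub_nonneg.mpr ((one_le_div hα).mpr hN))]
    field_simp
    ring
  have hsubst := integral_rpow_smul_comp_rpow_Ioi (fun y => exp (-y ^ 2 - ε * y))
    (half_pos hα).ne' N
  simp only [smul_eq_mul] at hsubst
  rw [abs_of_pos (half_pos hα), inv_div, ← hexponent] at hsubst
  simp only [faxenIntegrand]
  rw [← hsubst]
  refine setIntegral_congr_fun measurableSet_Ioi fun q (hq : 0 < q) => ?_
  simp only [← rpow_mul_natCast hq.le, Nat.cast_ofNat, div_mul_cancel₀ α two_ne_zero]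

theorem IN_asymptotics_lambda_eq_half_alpha_general {α : ℝ} (hα : 0 < α) (ε : ℝ) :
    Tendsto (fun N : ℝ =>
        (∫ q in Set.Ioi 0, q ^ (N - 1) * exp (-(q ^ α) - ε * q ^ (α / 2))) /
          (α⁻¹ * exp (ε ^ 2 / 8) * Gamma (N / α) * exp (-ε * √(N / α - 1))))
      atTop (𝓝 1) := by
  have hsqrt : Tendsto (fun N : ℝ => √(N / α - 1)) atTop atTop :=
    tendsto_sqrt_atTop.comp
      (tendsto_atTop_add_const_right _ (-1) (tendsto_id.atTop_div_const hα))
  have hlim := ((faxenIntegrand.tendsto_integral_div_Gamma_mul_exp ε).comp hsqrt).div_const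
    (exp (ε ^ 2 / 8))
  rw [div_self (exp_ne_zero _)] at hlim
  refine hlim.congr' ?_
  filter_upwards [eventually_ge_atTop α] with N hN
  rw [integral_rpow_mul_exp_neg_rpow_sub_rpow_half hα ε N hN, Function.comp_apply,
    sq_sqrt (sub_nonneg.mpr ((one_le_div hα).mpr hN)), sub_add_cancel]
  field_simp

/-- For `0 < α < 1`, `λ = α/2` and `ε > 0`,
`I_N(ε) = ∫₀^∞ q^{N−1} e^{−q^α − ε q^{α/2}} dq ∼ α⁻¹ e^{ε²/8} Γ(N/α) e^{−ε√(N/α−1)}`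
as `N → ∞`. -/
theorem IN_asymptotics_lambda_eq_half_alpha
    (α lam ε : ℝ) (hα : 0 < α) (hα1 : α < 1) (hlam : lam = α / 2) (hε : 0 < ε) :
    Tendsto (fun N : ℝ =>
        (∫ q in Set.Ioi (0:ℝ), q ^ (N - 1) * Real.exp (-(q ^ α) - ε * q ^ lam)) /
          (α⁻¹ * Real.exp (ε ^ 2 / 8) * Real.Gamma (N / α) *
            Real.exp (-ε * Real.sqrt (N / α - 1))))
      atTop (nhds 1) := by
  subst hlam
  exact IN_asymptotics_lambda_eq_half_alpha_general hα ε
end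

section
/- Let 0<α<1 and α/2 ≤ λ < 2α/3, let ε > 0, and set β = λ/α. Define I_N(ε) = ∫₀^∞ q^{N−1} e^{−q^α − ε q^λ} dq for N > 0. Then as N → ∞, I_N(ε) ∼ α^{−1} Γ(N/α) · exp(−ε(N/α − 1)^β + (εβ)² (N/α − 1)^{2β−1} / 2), i.e., the ratio of the two sides tends to 1. -/
open Real MeasureTheory Filter

/-!
Substituting `q = exp (u / α)` turns `I_N(ε)` into `α⁻¹ ∫ exp (n u - e^u - ε e^{β u}) du` with
`n = N / α`, and `Γ(n)` is the same integral at `ε = 0`. The exponent is concave in `u` and has its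
maximum near `log n - ε β n^{β - 1}`. With `u = log n + v`, `v = -ε β n^{β - 1} + z n^{-1/2}`, it
converges, after subtraction of its approximate maximum, pointwise to `-z² / 2`: the Taylor
remainders are of order `n v³` and `n^β v²`, and both vanish in the limit when `β < 2 / 3`. For
concave exponents pointwise convergence already yields an exponential majorant, so the integrals
converge, and the common Stirling factor cancels in the quotient by `Γ(n)`.
-/

open Set Asymptotics Topology

section LogConcave

variable {f : ℝ → ℝ} {r δ D : ℝ}

lemma concaveOn_le_sub_mul_of_nonneg (hf : ConcaveOn ℝ univ f) (hr : 0 < r) (hδ : 0 ≤ δ)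
    (hright : f 0 - f r ∈ Icc δ D) (hleft : f 0 - f (-r) ≤ D) {z : ℝ} (hz : 0 ≤ z) :
    f z ≤ f 0 + D + δ - δ / r * z := by
  obtain ⟨hδr, hrD⟩ := hright
  rcases le_or_gt z r with hzr | hrz
  · rcases hz.eq_or_lt with rfl | hz
    · linarith
    have hslope := hf.slope_anti_adjacent (mem_univ (-r)) (mem_univ z) (neg_lt_zero.2 hr) hz
    rw [sub_zero, zero_sub, neg_neg, div_le_iff₀ hz] at hslope
    have hD : (f 0 - f (-r)) / r * z ≤ D / r * z := by gcongr
    have hle : (D + δ) * (z / r) ≤ D + δ :=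
      mul_le_of_le_one_right (by linarith) ((div_le_one hr).2 hzr)
    linarith [show (D + δ) * (z / r) = D / r * z + δ / r * z by ring]
  · have hslope := hf.slope_anti_adjacent (mem_univ 0) (mem_univ z) hr hrz
    rw [sub_zero, div_le_iff₀ (sub_pos.2 hrz)] at hslope
    have htail : (f r - f 0) / r * (z - r) ≤ -δ / r * (z - r) := by
      have := sub_nonneg.2 hrz.le
      gcongr
      linarith
    have hsplit : -δ / r * (z - r) = δ - δ / r * z := by field_simp; ring
    linarith

lemma concaveOn_le_sub_mul_abs (hf : ConcaveOn ℝ univ f) (hr : 0 < r) (hδ : 0 ≤ δ)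
    (hright : f 0 - f r ∈ Icc δ D) (hleft : f 0 - f (-r) ∈ Icc δ D) (z : ℝ) :
    f z ≤ f 0 + D + δ - δ / r * |z| := by
  rcases le_total 0 z with hz | hz
  · rw [abs_of_nonneg hz]
    exact concaveOn_le_sub_mul_of_nonneg hf hr hδ hright hleft.2 hz
  · have hneg : ConcaveOn ℝ univ fun x ↦ f (-x) := hf.comp_linearMap (-LinearMap.id)
    simpa [abs_of_nonpos hz] using
      concaveOn_le_sub_mul_of_nonneg hneg hr hδ (by simpa using hleft) (by simpa using hright.2)
        (neg_nonneg.2 hz)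

lemma integrable_exp_neg_mul_abs {c : ℝ} (hc : 0 < c) :
    Integrable fun z : ℝ ↦ exp (-c * |z|) := by
  refine .of_integral_ne_zero ?_
  rw [integral_comp_abs (f := fun x ↦ exp (-c * x)), integral_exp_mul_Ioi (neg_neg_iff_pos.2 hc)]
  simp [hc.ne']

theorem tendsto_integral_exp_of_concaveOn {ι : Type*} {l : Filter ι} [l.IsCountablyGenerated]
    {F : ι → ℝ → ℝ} {g : ℝ → ℝ} (hF : ∀ᶠ i in l, ConcaveOn ℝ univ (F i))
    (hlim : ∀ z, Tendsto (F · z) l (𝓝 (g z))) (hr : 0 < r) (hright : g r < g 0)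
    (hleft : g (-r) < g 0) :
    Tendsto (fun i ↦ ∫ z, exp (F i z)) l (𝓝 (∫ z, exp (g z))) := by
  obtain ⟨δ, hδ, hδ_lt⟩ := exists_between (lt_min (sub_pos.2 hright) (sub_pos.2 hleft))
  obtain ⟨D, hD_gt⟩ := exists_gt (max (g 0 - g r) (g 0 - g (-r)))
  rw [lt_min_iff] at hδ_lt
  rw [max_lt_iff] at hD_gt
  have hdrop {w : ℝ} (hw : g 0 - g w ∈ Ioo δ D) : ∀ᶠ i in l, F i 0 - F i w ∈ Icc δ D :=
    ((hlim 0).sub (hlim w)).eventually (Icc_mem_nhds hw.1 hw.2)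
  have hpeak : ∀ᶠ i in l, F i 0 < g 0 + 1 := (hlim 0).eventually_lt_const (lt_add_one _)
  refine tendsto_integral_filter_of_dominated_convergence
    (fun z ↦ exp (g 0 + 1 + D + δ) * exp (-(δ / r) * |z|)) ?_ ?_
    ((integrable_exp_neg_mul_abs (div_pos hδ hr)).const_mul _)
    (.of_forall fun z ↦ (continuous_exp.tendsto _).comp (hlim z))
  · filter_upwards [hF] with i hFi
    exact (continuous_exp.comp
      (continuousOn_univ.1 (hFi.continuousOn isOpen_univ))).aestronglyMeasurable
  · filter_upwards [hF, hpeak, hdrop ⟨hδ_lt.1, hD_gt.1⟩, hdrop ⟨hδ_lt.2, hD_gt.2⟩]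
      with i hFi hpeak hright hleft
    refine .of_forall fun z ↦ ?_
    rw [norm_of_nonneg (exp_pos _).le, ← exp_add, exp_le_exp]
    linarith [concaveOn_le_sub_mul_abs hFi hr hδ.le hright hleft z]

end LogConcave

section Rpow

variable {p : ℝ}

lemma tendsto_rpow_atTop_nhds_zero_of_neg (hp : p < 0) :
    Tendsto (fun x : ℝ ↦ x ^ p) atTop (𝓝 0) := by
  simpa using tendsto_rpow_neg_atTop (neg_pos.2 hp)

lemma tendsto_add_rpow_sub_rpow (h : ℝ) (hp : p < 1) :
    Tendsto (fun x : ℝ ↦ (x + h) ^ p - x ^ p) atTop (𝓝 0) := by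
  have hdiff : (fun t : ℝ ↦ (1 + t) ^ p - 1) =O[𝓝 0] fun t ↦ t := by
    have hd : HasDerivAt (fun t : ℝ ↦ (1 + t) ^ p) (1 * p * (1 + 0) ^ (p - 1)) 0 :=
      ((hasDerivAt_id (0 : ℝ)).const_add 1).rpow_const (by simp)
    simpa using hd.isBigO_sub
  have hscaled : (fun x : ℝ ↦ x ^ p * ((1 + h / x) ^ p - 1)) =O[atTop] fun x ↦ x ^ p * (h / x) :=
    (isBigO_refl _ _).mul (hdiff.comp_tendsto (tendsto_const_nhds.div_atTop tendsto_id))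
  have hsmall : Tendsto (fun x : ℝ ↦ x ^ p * (h / x)) atTop (𝓝 0) := by
    rw [← mul_zero h]
    refine ((tendsto_rpow_atTop_nhds_zero_of_neg (sub_neg.2 hp)).const_mul h).congr' ?_
    filter_upwards [eventually_ne_atTop 0] with x hx
    rw [rpow_sub_one hx]
    ring
  refine (hscaled.trans_tendsto hsmall).congr' ?_
  filter_upwards [eventually_gt_atTop 0, eventually_gt_atTop (-h)] with x hx hxh
  have hfactor : x + h = x * (1 + h / x) := by field_simp
  have hpos : 0 ≤ 1 + h / x := (pos_of_mul_pos_right (by linarith : 0 < x * (1 + h / x)) hx.le).le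
  rw [hfactor, mul_rpow hx.le hpos]
  ring

end Rpow

section Saddle

/-- The exponent of the Faxén integral in the logarithmic variable `u = α log q`, with
`n = N / α` and `β = λ / α`; at `ε = 0` it is the exponent of `Γ(n)`. -/
noncomputable def logPhase (ε β n u : ℝ) : ℝ := n * u - exp u - ε * exp (β * u)

/-- The displacement from `log n`, in the rescaled variable `z`, around the approximate critical
point `log n - ε β n ^ (β - 1)` of `logPhase ε β n`. -/
noncomputable def saddleShift (ε β n z : ℝ) : ℝ := -(ε * β) * n ^ (β - 1) + z * n ^ (-1 / 2 : ℝ)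

/-- The part of the (approximate) maximum of `logPhase ε β n` due to `ε`; it is the exponent in
the asymptotics of the Faxén integral. -/
noncomputable def saddleCorrection (ε β n : ℝ) : ℝ :=
  -ε * n ^ β + (ε * β) ^ 2 * n ^ (2 * β - 1) / 2

/-- The function `logPhase` recentred at its approximate maximum, with that maximum subtracted. -/
noncomputable def centeredPhase (ε β n z : ℝ) : ℝ :=
  logPhase ε β n (log n + saddleShift ε β n z) - (n * log n - n + saddleCorrection ε β n)

variable {ε β n : ℝ}

lemma concaveOn_logPhase (hε : 0 ≤ ε) : ConcaveOn ℝ univ (logPhase ε β n) := by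
  have hlinear : ConcaveOn ℝ univ fun u ↦ n * u :=
    (LinearMap.mulLeft ℝ n).concaveOn convex_univ
  have hexp : ConvexOn ℝ univ fun u ↦ exp (β * u) :=
    convexOn_exp.comp_linearMap (LinearMap.mulLeft ℝ β)
  exact (hlinear.sub convexOn_exp).sub (hexp.smul hε)

lemma concaveOn_centeredPhase (hε : 0 ≤ ε) : ConcaveOn ℝ univ (centeredPhase ε β n) := by
  have haffine : ConcaveOn ℝ univ fun z ↦ logPhase ε β n (log n + saddleShift ε β n z) := by
    simpa [Function.comp_def, saddleShift, add_assoc] using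
      ((concaveOn_logPhase hε).translate_right (log n + -(ε * β) * n ^ (β - 1))).comp_linearMap
        (LinearMap.mulRight ℝ (n ^ (-1 / 2 : ℝ)))
  exact haffine.sub (convexOn_const _ convex_univ)

lemma centeredPhase_eq (hn : 0 < n) (z : ℝ) :
    centeredPhase ε β n z = -z ^ 2 / 2
      - n * (exp (saddleShift ε β n z)
          - (1 + saddleShift ε β n z + saddleShift ε β n z ^ 2 / 2))
      - ε * (n ^ β * (exp (β * saddleShift ε β n z) - (1 + β * saddleShift ε β n z))) := by
  have hexp (p v : ℝ) : exp (p * (log n + v)) = n ^ p * exp (p * v) := by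
    rw [mul_add, exp_add, rpow_def_of_pos hn, mul_comm p]
  have hcross : n * n ^ (β - 1) = n ^ β := by
    rw [mul_comm, ← rpow_add_one hn.ne', sub_add_cancel]
  have hsq : n ^ β * n ^ (β - 1) = n ^ (2 * β - 1) := by
    rw [← rpow_add hn]
    ring_nf
  have hhalf : n * (n ^ (-1 / 2 : ℝ)) ^ 2 = 1 := by
    rw [← rpow_mul_natCast hn.le]
    norm_num [rpow_neg_one, hn.ne']
  have hlinear : n * saddleShift ε β n z ^ 2 / 2 + ε * β * n ^ β * saddleShift ε β n z
      + (ε * β) ^ 2 * n ^ (2 * β - 1) / 2 = z ^ 2 / 2 := by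
    rw [← hsq, ← hcross, saddleShift]
    linear_combination z ^ 2 / 2 * hhalf
  rw [centeredPhase, logPhase, saddleCorrection, hexp, exp_add, exp_log hn]
  linear_combination -hlinear

lemma tendsto_rpow_mul_saddleShift {s : ℝ} (hβ : s + β < 1) (hs : s < 1 / 2) (z : ℝ) :
    Tendsto (fun n ↦ n ^ s * saddleShift ε β n z) atTop (𝓝 0) := by
  have hsum : Tendsto (fun n : ℝ ↦ -(ε * β) * n ^ (s + (β - 1)) + z * n ^ (s + -1 / 2)) atTop
      (𝓝 (-(ε * β) * 0 + z * 0)) :=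
    ((tendsto_rpow_atTop_nhds_zero_of_neg (by linarith)).const_mul _).add
      ((tendsto_rpow_atTop_nhds_zero_of_neg (by linarith)).const_mul _)
  rw [mul_zero, mul_zero, add_zero] at hsum
  refine hsum.congr' ?_
  filter_upwards [eventually_gt_atTop 0] with n hn
  rw [saddleShift, rpow_add hn, rpow_add hn]
  ring

lemma tendsto_saddleShift (hβ : β < 1) (z : ℝ) :
    Tendsto (fun n ↦ saddleShift ε β n z) atTop (𝓝 0) := by
  simpa using tendsto_rpow_mul_saddleShift (ε := ε) (s := 0) (by linarith) (by norm_num) z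

lemma tendsto_mul_saddleShift_pow_three (hβ : β < 2 / 3) (z : ℝ) :
    Tendsto (fun n ↦ n * saddleShift ε β n z ^ 3) atTop (𝓝 0) := by
  have hcube := (tendsto_rpow_mul_saddleShift (ε := ε) (β := β) (s := 1 / 3) (by linarith)
    (by norm_num) z).pow 3
  rw [zero_pow three_ne_zero] at hcube
  refine hcube.congr' ?_
  filter_upwards [eventually_gt_atTop 0] with n hn
  rw [mul_pow, ← rpow_mul_natCast hn.le]
  norm_num

lemma tendsto_rpow_mul_saddleShift_sq (hβ : β < 2 / 3) (z : ℝ) :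
    Tendsto (fun n ↦ n ^ β * saddleShift ε β n z ^ 2) atTop (𝓝 0) := by
  have hsq := (tendsto_rpow_mul_saddleShift (ε := ε) (β := β) (s := β / 2) (by linarith)
    (by linarith) z).pow 2
  rw [zero_pow two_ne_zero] at hsq
  refine hsq.congr' ?_
  filter_upwards [eventually_gt_atTop 0] with n hn
  rw [mul_pow, ← rpow_mul_natCast hn.le]
  norm_num

lemma tendsto_centeredPhase (hβ : β < 2 / 3) (z : ℝ) :
    Tendsto (fun n ↦ centeredPhase ε β n z) atTop (𝓝 (-z ^ 2 / 2)) := by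
  have hshift := tendsto_saddleShift (ε := ε) (hβ.trans (by norm_num)) z
  have hcubic : (fun v : ℝ ↦ exp v - (1 + v + v ^ 2 / 2)) =O[𝓝 0] (· ^ 3) := by
    simpa [Finset.sum_range_succ] using exp_sub_sum_range_isBigO_pow 3
  have hquadratic : (fun v : ℝ ↦ exp (β * v) - (1 + β * v)) =O[𝓝 0] (· ^ 2) := by
    have hexp : (fun w : ℝ ↦ exp w - (1 + w)) =O[𝓝 0] (· ^ 2) := by
      simpa [Finset.sum_range_succ] using exp_sub_sum_range_isBigO_pow 2
    have hβv : Tendsto (fun v ↦ β * v) (𝓝 0) (𝓝 0) := by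
      simpa using (continuous_const_mul β).tendsto 0
    refine (hexp.comp_tendsto hβv).trans ?_
    simpa [Function.comp_def, mul_pow] using
      (isBigO_refl (fun v : ℝ ↦ v ^ 2) (𝓝 0)).const_mul_left (β ^ 2)
  have hcubic_lim := ((isBigO_refl (fun n : ℝ ↦ n) atTop).mul
    (hcubic.comp_tendsto hshift)).trans_tendsto (tendsto_mul_saddleShift_pow_three hβ z)
  have hquadratic_lim := ((isBigO_refl (fun n : ℝ ↦ n ^ β) atTop).mul
    (hquadratic.comp_tendsto hshift)).trans_tendsto (tendsto_rpow_mul_saddleShift_sq hβ z)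
  have hlim := (hcubic_lim.const_sub (-z ^ 2 / 2)).sub (hquadratic_lim.const_mul ε)
  rw [mul_zero, sub_zero, sub_zero] at hlim
  refine hlim.congr' ?_
  filter_upwards [eventually_gt_atTop 0] with n hn
  exact (centeredPhase_eq hn z).symm

lemma tendsto_integral_exp_centeredPhase (hε : 0 ≤ ε) (hβ : β < 2 / 3) :
    Tendsto (fun n ↦ ∫ z, exp (centeredPhase ε β n z)) atTop (𝓝 √(2 * π)) := by
  have hgauss : ∫ z : ℝ, exp (-z ^ 2 / 2) = √(2 * π) := by
    convert integral_gaussian (1 / 2) using 4 <;> ring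
  rw [← hgauss]
  exact tendsto_integral_exp_of_concaveOn (.of_forall fun _ ↦ concaveOn_centeredPhase hε)
    (tendsto_centeredPhase hβ) one_pos (by norm_num) (by norm_num)

lemma integral_exp_logPhase_eq (hn : 0 < n) :
    ∫ u, exp (logPhase ε β n u) =
      n ^ (-1 / 2 : ℝ) * exp (n * log n - n + saddleCorrection ε β n) *
        ∫ z, exp (centeredPhase ε β n z) := by
  have hscale : 0 < n ^ (-1 / 2 : ℝ) := rpow_pos_of_pos hn _
  have hchange : ∫ z, exp (logPhase ε β n (log n + saddleShift ε β n z)) =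
      (n ^ (-1 / 2 : ℝ))⁻¹ * ∫ u, exp (logPhase ε β n u) := by
    simp only [saddleShift, ← add_assoc]
    rw [Measure.integral_comp_mul_right
        (fun w ↦ exp (logPhase ε β n (log n + -(ε * β) * n ^ (β - 1) + w))),
      integral_add_left_eq_self (fun u ↦ exp (logPhase ε β n u)),
      abs_of_pos (inv_pos.2 hscale), smul_eq_mul]
  simp only [centeredPhase, exp_sub, integral_div]
  rw [hchange]
  field_simp

theorem isEquivalent_integral_exp_logPhase (hε : 0 ≤ ε) (hβ : β < 2 / 3) :
    (fun n ↦ ∫ u, exp (logPhase ε β n u)) ~[atTop] fun n ↦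
      n ^ (-1 / 2 : ℝ) * exp (n * log n - n + saddleCorrection ε β n) * √(2 * π) := by
  have hconst : (fun n ↦ ∫ z, exp (centeredPhase ε β n z)) ~[atTop] fun _ ↦ √(2 * π) :=
    (isEquivalent_const_iff_tendsto (by positivity)).2 (tendsto_integral_exp_centeredPhase hε hβ)
  refine (IsEquivalent.refl.mul hconst).congr_left ?_
  filter_upwards [eventually_gt_atTop 0] with n hn
  exact (integral_exp_logPhase_eq hn).symm

lemma isEquivalent_exp_saddleCorrection_sub_one (hβ : β < 1) :
    (fun n ↦ exp (saddleCorrection ε β n)) ~[atTop]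
      fun n ↦ exp (saddleCorrection ε β (n - 1)) := by
  have hdiff : Tendsto (fun n ↦ saddleCorrection ε β n - saddleCorrection ε β (n - 1)) atTop
      (𝓝 0) := by
    have hlim := ((tendsto_add_rpow_sub_rpow (-1) hβ).const_mul ε).sub
      ((tendsto_add_rpow_sub_rpow (p := 2 * β - 1) (-1) (by linarith)).const_mul ((ε * β) ^ 2 / 2))
    rw [mul_zero, mul_zero, sub_zero] at hlim
    refine hlim.congr fun n ↦ ?_
    simp only [saddleCorrection, ← sub_eq_add_neg]
    ring
  refine isEquivalent_of_tendsto_one ?_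
  have hexp := (continuous_exp.tendsto 0).comp hdiff
  rw [exp_zero] at hexp
  exact hexp.congr fun n ↦ exp_sub _ _

end Saddle

section Faxen

lemma integral_Ioi_zero_eq_integral_exp_smul {E : Type*} [NormedAddCommGroup E] [NormedSpace ℝ E]
    (g : ℝ → E) : ∫ q in Ioi (0 : ℝ), g q = ∫ u, exp u • g (exp u) := by
  rw [← range_exp, ← image_univ, integral_image_eq_integral_abs_deriv_smul MeasurableSet.univ
    (fun u _ ↦ (hasDerivAt_exp u).hasDerivWithinAt) exp_injective.injOn]
  simp only [abs_exp, Measure.restrict_univ]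

lemma integral_rpow_mul_exp_eq_integral_exp_logPhase {α : ℝ} (hα : 0 < α) (lam ε N : ℝ) :
    ∫ q in Ioi (0 : ℝ), q ^ (N - 1) * exp (-(q ^ α) - ε * q ^ lam) =
      α⁻¹ * ∫ u, exp (logPhase ε (lam / α) (N / α) u) := by
  have hscale := Measure.integral_comp_mul_left (fun u ↦ exp (logPhase ε (lam / α) (N / α) u)) α
  rw [abs_of_pos (inv_pos.2 hα), smul_eq_mul] at hscale
  rw [integral_Ioi_zero_eq_integral_exp_smul, ← hscale]
  congr with u
  rw [smul_eq_mul, ← exp_mul, ← exp_mul, ← exp_mul, ← exp_add, ← exp_add, logPhase]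
  field_simp
  ring_nf

lemma Gamma_eq_integral_exp_logPhase_zero (β : ℝ) {n : ℝ} (hn : 0 < n) :
    Gamma n = ∫ u, exp (logPhase 0 β n u) := by
  have hone := integral_rpow_mul_exp_eq_integral_exp_logPhase one_pos β 0 n
  simp only [rpow_one, zero_mul, sub_zero, inv_one, one_mul, div_one] at hone
  rw [← hone, Real.Gamma_eq_integral hn]
  simp only [mul_comm]

theorem isEquivalent_integral_exp_logPhase_Gamma_mul_exp {ε β : ℝ} (hε : 0 ≤ ε)
    (hβ : β < 2 / 3) :
    (fun n ↦ ∫ u, exp (logPhase ε β n u)) ~[atTop]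
      fun n ↦ Gamma n * exp (saddleCorrection ε β n) := by
  have hGamma : Gamma ~[atTop] fun n ↦ n ^ (-1 / 2 : ℝ) * exp (n * log n - n) * √(2 * π) := by
    have hzero := isEquivalent_integral_exp_logPhase le_rfl hβ
    simp only [saddleCorrection, neg_zero, zero_mul, ne_eq, two_ne_zero, not_false_eq_true,
      zero_pow, zero_div, add_zero] at hzero
    refine hzero.congr_left ?_
    filter_upwards [eventually_gt_atTop 0] with n hn
    exact (Gamma_eq_integral_exp_logPhase_zero β hn).symm
  have hproduct := hGamma.mul (IsEquivalent.refl (u := fun n ↦ exp (saddleCorrection ε β n)))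
  refine ((isEquivalent_integral_exp_logPhase hε hβ).congr_right (.of_forall fun n ↦ ?_)).trans
    hproduct.symm
  simp only [Pi.mul_apply, exp_add]
  ring

end Faxen

theorem IN_asymptotics_middle_lambda_general
    (α lam ε β : ℝ) (hα : 0 < α) (hhigh : lam < 2 * α / 3) (hε : 0 ≤ ε) (hβ : β = lam / α) :
    Tendsto (fun N : ℝ =>
        (∫ q in Set.Ioi (0:ℝ), q ^ (N - 1) * Real.exp (-(q ^ α) - ε * q ^ lam)) /
          (α⁻¹ * Real.Gamma (N / α) *
            Real.exp (-ε * (N / α - 1) ^ β + (ε * β) ^ 2 * (N / α - 1) ^ (2 * β - 1) / 2)))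
      atTop (nhds 1) := by
  have hβ_lt : β < 2 / 3 := by rw [hβ, div_lt_iff₀ hα]; linarith
  have hphase : (fun n ↦ ∫ u, exp (logPhase ε β n u)) ~[atTop]
      fun n ↦ Gamma n * exp (saddleCorrection ε β (n - 1)) :=
    (isEquivalent_integral_exp_logPhase_Gamma_mul_exp hε hβ_lt).trans
      (IsEquivalent.refl.mul (isEquivalent_exp_saddleCorrection_sub_one (by linarith)))
  have hne : ∀ᶠ n in atTop, Gamma n * exp (saddleCorrection ε β (n - 1)) ≠ 0 := by
    filter_upwards [eventually_gt_atTop 0] with n hn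
    exact (mul_pos (Gamma_pos_of_pos hn) (exp_pos _)).ne'
  refine (((isEquivalent_iff_tendsto_one hne).1 hphase).comp
    (tendsto_id.atTop_div_const hα)).congr fun N ↦ ?_
  rw [integral_rpow_mul_exp_eq_integral_exp_logPhase hα, ← hβ, mul_assoc,
    mul_div_mul_left _ _ (inv_ne_zero hα.ne')]
  rfl

/-- For `0 < α < 1`, `α/2 ≤ λ < 2α/3`, `ε > 0` and `β = λ/α`,
`I_N(ε) = ∫₀^∞ q^{N−1} e^{−q^α − ε q^λ} dq
  ∼ α⁻¹ Γ(N/α) exp(−ε(N/α−1)^β + (εβ)²(N/α−1)^{2β−1}/2)` as `N → ∞`. -/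
theorem IN_asymptotics_middle_lambda
    (α lam ε β : ℝ) (hα : 0 < α) (hα1 : α < 1)
    (hlow : α / 2 ≤ lam) (hhigh : lam < 2 * α / 3) (hε : 0 < ε) (hβ : β = lam / α) :
    Tendsto (fun N : ℝ =>
        (∫ q in Set.Ioi (0:ℝ), q ^ (N - 1) * Real.exp (-(q ^ α) - ε * q ^ lam)) /
          (α⁻¹ * Real.Gamma (N / α) *
            Real.exp (-ε * (N / α - 1) ^ β + (ε * β) ^ 2 * (N / α - 1) ^ (2 * β - 1) / 2)))
      atTop (nhds 1) :=
  IN_asymptotics_middle_lambda_general α lam ε β hα hhigh hε.le hβ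
end

section
/- Let 0 < α < 1. Then as q → ∞, ∫_q^∞ (r − q)³ e^{−2 r^α} dr ∼ (3/(8α⁴)) · q^{4(1−α)} · e^{−2 q^α}; that is, the ratio of the left-hand side to the right-hand side tends to 1 as q → ∞. -/
open Real MeasureTheory Filter

/-!
On the scale `r = q + q ^ (1 - α) * u` the exponent `r ^ α` exceeds `q ^ α` by
`x * ((1 + u / x) ^ α - 1)` with `x = q ^ α`, which tends to `α * u` as `q → ∞`. Hence, after the
factors `q ^ ((1 - α) * (s + 1))` and `exp (-c * q ^ α)` are pulled out, the integral tends to the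
Gamma integral `∫ u ^ s * exp (-(c * α) * u)`. For dominated convergence, let `β = min α 1`:
concavity of `t ↦ t ^ β` bounds the excess below by `u ^ β - 1`, uniformly in `x ≥ 1`.
-/

open Set Topology

theorem integral_Ioi_eq_smul_integral_comp_add_mul {E : Type*} [NormedAddCommGroup E]
    [NormedSpace ℝ E] (f : ℝ → E) (a : ℝ) {b : ℝ} (hb : 0 < b) :
    ∫ r in Ioi a, f r = b • ∫ u in Ioi 0, f (a + b * u) := by
  have translate : ∫ u in Ioi 0, f (a + u) = ∫ r in Ioi a, f r := by
    simpa using (measurePreserving_add_left (volume : Measure ℝ) a).setIntegral_preimage_emb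
      (measurableEmbedding_addLeft a) f (Ioi a)
  rw [integral_comp_mul_left_Ioi' (fun u => f (a + u)) 0 hb, mul_zero, translate]

/-- The growth of `r ↦ r ^ α` from `r = q` to `r = q + q ^ (1 - α) * u`, written in terms of
`x = q ^ α`; see `add_mul_rpow_sub_rpow`. -/
noncomputable def rpowIncrement (α x u : ℝ) : ℝ :=
  x * ((1 + u / x) ^ α - 1)

theorem add_mul_rpow_sub_rpow (α : ℝ) {q u : ℝ} (hq : 0 < q) (hu : 0 ≤ u) :
    (q + q ^ (1 - α) * u) ^ α - q ^ α = rpowIncrement α (q ^ α) u := by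
  have factor : q + q ^ (1 - α) * u = q * (1 + u / q ^ α) := by
    rw [rpow_sub hq, rpow_one]
    ring
  rw [factor, mul_rpow hq.le (by positivity), rpowIncrement]
  ring

theorem tendsto_rpowIncrement_atTop (α u : ℝ) :
    Tendsto (fun x => rpowIncrement α x u) atTop (𝓝 (α * u)) := by
  have hderiv : HasDerivAt (fun t : ℝ => (1 + u * t) ^ α) (α * u) 0 := by
    have hlin : HasDerivAt (fun t : ℝ => 1 + u * t) u 0 := by
      simpa using ((hasDerivAt_id (0 : ℝ)).const_mul u).const_add 1
    simpa [mul_comm] using hlin.rpow_const (p := α) (Or.inl (by simp))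
  refine (hderiv.tendsto_slope_zero_right.comp tendsto_inv_atTop_nhdsGT_zero).congr fun x => ?_
  simp [rpowIncrement, div_eq_mul_inv]

theorem rpowIncrement_le_of_exponent_le {α β x u : ℝ} (hβα : β ≤ α) (hx : 0 ≤ x) (hu : 0 ≤ u) :
    rpowIncrement β x u ≤ rpowIncrement α x u := by
  have hbase : 1 ≤ 1 + u / x := le_add_of_nonneg_right (by positivity)
  unfold rpowIncrement
  gcongr

theorem rpow_sub_one_le_rpowIncrement {β x u : ℝ} (hβ : 0 ≤ β) (hβ1 : β ≤ 1) (hx : 1 ≤ x)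
    (hu : 0 ≤ u) : u ^ β - 1 ≤ rpowIncrement β x u := by
  have hx0 : 0 < x := one_pos.trans_le hx
  have hconc : x⁻¹ * (1 + u) ^ β + (1 - x⁻¹) ≤ (1 + u / x) ^ β := by
    have hpoint : x⁻¹ * (1 + u) + (1 - x⁻¹) = 1 + u / x := by ring
    simpa [hpoint] using (concaveOn_rpow hβ hβ1).2
      (mem_Ici.2 (by positivity : 0 ≤ 1 + u)) (mem_Ici.2 zero_le_one) (inv_nonneg.2 hx0.le)
      (sub_nonneg.2 (inv_le_one_of_one_le₀ hx)) (add_sub_cancel _ _)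
  calc u ^ β - 1 ≤ (1 + u) ^ β - 1 := by
        gcongr
        exact le_add_of_nonneg_left zero_le_one
    _ = x * (x⁻¹ * (1 + u) ^ β + (1 - x⁻¹) - 1) := by field_simp; ring
    _ ≤ rpowIncrement β x u := by unfold rpowIncrement; gcongr

theorem rpow_min_one_sub_one_le_rpowIncrement {α x u : ℝ} (hα : 0 ≤ α) (hx : 1 ≤ x)
    (hu : 0 ≤ u) : u ^ min α 1 - 1 ≤ rpowIncrement α x u :=
  (rpow_sub_one_le_rpowIncrement (le_min hα zero_le_one) (min_le_right _ _) hx hu).trans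
    (rpowIncrement_le_of_exponent_le (min_le_left _ _) (zero_le_one.trans hx) hu)

theorem tendsto_integral_rpow_mul_exp_neg_mul_rpowIncrement {α c s : ℝ} (hα : 0 < α)
    (hc : 0 < c) (hs : -1 < s) :
    Tendsto (fun x => ∫ u in Ioi 0, u ^ s * exp (-c * rpowIncrement α x u)) atTop
      (𝓝 (Gamma (s + 1) / (c * α) ^ (s + 1))) := by
  have hlimit : ∫ u in Ioi 0, u ^ s * exp (-c * (α * u)) =
      Gamma (s + 1) / (c * α) ^ (s + 1) := by
    have h := integral_rpow_mul_exp_neg_mul_Ioi (neg_lt_iff_pos_add.1 hs) (mul_pos hc hα)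
    rw [one_div, inv_rpow (by positivity), inv_mul_eq_div] at h
    simpa only [add_sub_cancel_right, neg_mul, mul_assoc] using h
  rw [← hlimit]
  refine tendsto_integral_filter_of_dominated_convergence
    (fun u => exp c * (u ^ s * exp (-c * u ^ min α 1))) ?_ ?_ ?_ ?_
  · refine Eventually.of_forall fun x => Measurable.aestronglyMeasurable ?_
    unfold rpowIncrement
    fun_prop
  · filter_upwards [eventually_ge_atTop 1] with x hx
    filter_upwards [ae_restrict_mem measurableSet_Ioi] with u (hu : 0 < u)
    rw [norm_of_nonneg (by positivity), mul_left_comm, ← exp_add]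
    gcongr
    linarith [mul_le_mul_of_nonneg_left
      (rpow_min_one_sub_one_le_rpowIncrement hα.le hx hu.le) hc.le]
  · exact (integrableOn_rpow_mul_exp_neg_mul_rpow hs (lt_min hα one_pos) hc).const_mul _
  · exact Eventually.of_forall fun u =>
      (((tendsto_rpowIncrement_atTop α u).const_mul (-c)).rexp).const_mul _

theorem integral_Ioi_sub_rpow_mul_exp_neg_mul_rpow (α c s : ℝ) {q : ℝ} (hq : 0 < q) :
    ∫ r in Ioi q, (r - q) ^ s * exp (-c * r ^ α) =
      q ^ ((1 - α) * (s + 1)) * exp (-c * q ^ α) *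
        ∫ u in Ioi 0, u ^ s * exp (-c * rpowIncrement α (q ^ α) u) := by
  have hscale : 0 < q ^ (1 - α) := rpow_pos_of_pos hq _
  rw [integral_Ioi_eq_smul_integral_comp_add_mul _ q hscale, smul_eq_mul,
    ← integral_const_mul, ← integral_const_mul]
  refine setIntegral_congr_fun measurableSet_Ioi fun u (hu : 0 < u) => ?_
  have hpow : q ^ ((1 - α) * (s + 1)) = (q ^ (1 - α)) ^ s * q ^ (1 - α) := by
    rw [rpow_mul hq.le, rpow_add_one hscale.ne']
  have hexp : exp (-c * (q + q ^ (1 - α) * u) ^ α) =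
      exp (-c * q ^ α) * exp (-c * rpowIncrement α (q ^ α) u) := by
    rw [← exp_add, ← add_mul_rpow_sub_rpow α hq hu.le]
    ring_nf
  simp only [add_sub_cancel_left, mul_rpow hscale.le hu.le, hexp, hpow]
  ring

theorem tail_integral_asymptotics_general {α c s : ℝ} (hα : 0 < α) (hc : 0 < c) (hs : -1 < s) :
    Tendsto (fun q : ℝ => (∫ r in Ioi q, (r - q) ^ s * exp (-c * r ^ α)) /
        (Gamma (s + 1) / (c * α) ^ (s + 1) * q ^ ((1 - α) * (s + 1)) * exp (-c * q ^ α)))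
      atTop (𝓝 1) := by
  have hconst : 0 < Gamma (s + 1) / (c * α) ^ (s + 1) :=
    div_pos (Gamma_pos_of_pos (neg_lt_iff_pos_add.1 hs)) (by positivity)
  have hlim := ((tendsto_integral_rpow_mul_exp_neg_mul_rpowIncrement hα hc hs).comp
    (tendsto_rpow_atTop hα)).div_const (Gamma (s + 1) / (c * α) ^ (s + 1))
  rw [div_self hconst.ne'] at hlim
  refine hlim.congr' ?_
  filter_upwards [eventually_gt_atTop 0] with q hq
  have hfactor : q ^ ((1 - α) * (s + 1)) * exp (-c * q ^ α) ≠ 0 := by positivity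
  rw [integral_Ioi_sub_rpow_mul_exp_neg_mul_rpow α c s hq, mul_assoc (_ / _),
    mul_comm (_ / _), mul_div_mul_left _ _ hfactor, Function.comp_apply]

theorem Gamma_four_div_two_mul_pow_four (α : ℝ) :
    Gamma 4 / (2 * α) ^ 4 = 3 / (8 * α ^ 4) := by
  norm_num [Gamma_ofNat_eq_factorial, Nat.factorial, mul_pow]
  ring

/-- Laplace-type asymptotics: for `0 < α < 1`,
`∫_q^∞ (r − q)³ e^{−2r^α} dr ∼ (3/(8α⁴)) q^{4(1−α)} e^{−2q^α}` as `q → ∞`. -/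
theorem tail_integral_asymptotics (α : ℝ) (hα : 0 < α) (hα1 : α < 1) :
    Tendsto (fun q : ℝ =>
        (∫ r in Set.Ioi q, (r - q) ^ 3 * Real.exp (-2 * r ^ α)) /
          ((3 / (8 * α ^ 4)) * q ^ (4 * (1 - α)) * Real.exp (-2 * q ^ α)))
      atTop (nhds 1) := by
  have h := tail_integral_asymptotics_general (s := 3) hα two_pos (by norm_num)
  simpa only [show (3 : ℝ) + 1 = 4 by norm_num, rpow_ofNat, Gamma_four_div_two_mul_pow_four,
    mul_comm (1 - α)] using h
end
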